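/- Let K and L be convex bodies in ℝ³, both centrally symmetric about the origin O, with L contained in the interior of K and L strictly convex. Suppose that for every point z on the boundary of K the graze Σ(L,z) is contained in a plane Δ_z, and that K is almost free with respect to L. Then for each x ∈ bd K, the line through x and −x meets the plane Δ_x in a single point O_x, and the graze Σ(L,x) is centrally symmetric with centre O_x, i.e., for every point p ∈ Σ(L,x) the point 2·O_x − p also belongs to Σ(L,x). -/

import Mathlib

open Metric Set

noncomputable section

/-- The ambient space ℝ³. -/
abbrev E3 := EuclideanSpace ℝ (Fin 3)

/-- The cone generated by `L` with apex `x`: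
`C(L,x) = {x + λ (y - x) : y ∈ L, λ ≥ 0}`. -/
def coneGen (L : Set E3) (x : E3) : Set E3 :=
  {p | ∃ y ∈ L, ∃ l : ℝ, 0 ≤ l ∧ p = x + l • (y - x)}

/-- The support cone `S(L,x)` of `L` from `x`, the boundary of `C(L,x)`. -/
def suppCone (L : Set E3) (x : E3) : Set E3 := frontier (coneGen L x)

/-- The graze `Σ(L,x) = S(L,x) ∩ bd L`. -/
def graze (L : Set E3) (x : E3) : Set E3 := suppCone L x ∩ frontier L

/-- An affine subspace of `ℝ³` is a plane if its direction is 2-dimensional. -/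
def IsPlane (P : AffineSubspace ℝ E3) : Prop :=
  Module.finrank ℝ P.direction = 2

/-- The line through two points. -/
def lineThrough (a b : E3) : Set E3 := ↑(affineSpan ℝ ({a, b} : Set E3))

/-- `K` is almost free with respect to `L` (given the planes `Δ z` containing the
grazes `Σ(L,z)` for `z ∈ bd K`): for every `z ∈ bd K` and every
`w ∈ Π_z ∩ bd K`, where `Π_z` is the plane through the origin parallel to `Δ z`,
the line through `z` and `w` does not meet `L`. -/
def AlmostFree (K L : Set E3) (Δ : E3 → AffineSubspace ℝ E3) : Prop :=
  ∀ z ∈ frontier K, ∀ w ∈ (↑(Δ z).direction : Set E3) ∩ frontier K,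
    Disjoint (lineThrough z w) L

/-!
Fix `x ∈ bd K` and a point `p` of the graze `Σ(L,x)`. A projective chart sends the supporting plane
of `L` through `x` and `p` to infinity and `L` to an epigraph; as `L` is strictly convex, the
heights of the supporting planes form a `C¹` convex function `G` of their slopes. The points of
`bd K` in the plane at infinity correspond to the support lines of a planar convex body, and
planarity of their grazes says that on each of these lines the gradient of `G` stays on an affine
line. Transport along the characteristics of this first order equation, once around the body, shows
that the derivative of `G` along the support line at angle `0` is a linear function plus a periodic
one, the ripple. Comparing nearly antipodal support lines, which meet arbitrarily far out, shows
that the ripple is additive up to a constant; being bounded, it is constant. So `G` is quadratic on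
that line, that is, the support cone `S(L,x)` is a quadratic cone.

Let `w ∈ Π_x ∩ bd K`. As `K` is almost free, the grazes from `w` and from `-w` both meet `Σ(L,x)` in
two points; for the quadratic form of the cone the two chords so obtained are orthogonal to `w - x`
and to `-w - x`. By central symmetry the planes of these grazes are parallel, hence so are the
chords, and their common direction in `Π_x` is orthogonal to both `x` and `w`. It follows that `x`
is orthogonal to `Π_x`, so the reflection in the line through `x` and `-x` along `Π_x` preserves the
cone as well as `Δ_x`, and with them the graze.
-/

section RealAnalysis

open MeasureTheory Filter Topology

lemma eq_of_locallyLipschitz_of_ae_hasDerivAt_zero {f : ℝ → ℝ} (hf : LocallyLipschitz f)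
    (h0 : ∀ᵐ x, HasDerivAt f 0 x) (a b : ℝ) : f a = f b := by
  obtain ⟨K, hK⟩ := (hf.locallyLipschitzOn (s := uIcc a b)).exists_lipschitzOnWith_of_compact
    isCompact_uIcc
  obtain ⟨C, hC⟩ := hK.absolutelyContinuousOnInterval.const_of_ae_hasDerivAt_zero
    (h0.mono fun x hx _ => hx)
  rw [hC a left_mem_uIcc, hC b right_mem_uIcc]

lemma hasFDerivAt_of_continuous_subgradient {E : Type*} [NormedAddCommGroup E] [NormedSpace ℝ E]
    {G : E → ℝ} {D : E → StrongDual ℝ E} (hD : Continuous D)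
    (hG : ∀ x y, G x + D x (y - x) ≤ G y) (x : E) : HasFDerivAt G (D x) x := by
  rw [hasFDerivAt_iff_isLittleO, Asymptotics.isLittleO_iff]
  intro c hc
  filter_upwards [hD.continuousAt.eventually (closedBall_mem_nhds (D x) hc)] with y hy
  have remainder_nonneg : 0 ≤ G y - G x - D x (y - x) := by linarith [hG x y]
  have remainder_le : G y - G x - D x (y - x) ≤ (D y - D x) (y - x) := by
    have := hG y x
    rw [← neg_sub y x, map_neg] at this
    rw [sub_apply]
    linarith
  rw [Real.norm_of_nonneg remainder_nonneg]
  exact remainder_le.trans <| (le_abs_self _).trans <| (D y - D x).le_of_opNorm_le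
    (mem_closedBall_iff_norm.1 hy) (y - x)

lemma tendsto_div_of_hasDerivAt {𝕜 : Type*} [NontriviallyNormedField 𝕜] {f g : 𝕜 → 𝕜}
    {f' g' a : 𝕜} (hf : HasDerivAt f f' a) (hg : HasDerivAt g g' a) (hfa : f a = 0)
    (hga : g a = 0) (hg' : g' ≠ 0) : Tendsto (fun x => f x / g x) (𝓝[≠] a) (𝓝 (f' / g')) := by
  refine (hf.tendsto_slope.div hg.tendsto_slope hg').congr' ?_
  filter_upwards [self_mem_nhdsWithin] with x hx
  have : x - a ≠ 0 := sub_ne_zero.2 hx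
  simp only [slope_def_field, Pi.div_apply, hfa, hga, sub_zero]
  field_simp

lemma eq_zero_of_eq_smul_comp_smul {E F : Type*} [NormedAddCommGroup E] [NormedSpace ℝ E]
    [NormedAddCommGroup F] [NormedSpace ℝ F] {f : E → F} (hf : Continuous f) {r : ℝ}
    (hr₀ : 0 ≤ r) (hr₁ : r < 1) (hfr : ∀ x, f x = r • f (r • x)) (x : E) : f x = 0 := by
  have iterate : ∀ n : ℕ, f x = r ^ n • f (r ^ n • x) := by
    intro n
    induction n with
    | zero => simp
    | succ n ih => rw [ih, hfr (r ^ n • x), smul_smul, smul_smul, pow_succ, mul_comm r]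
  have hpow : Tendsto (fun n : ℕ => r ^ n) atTop (𝓝 0) :=
    tendsto_pow_atTop_nhds_zero_of_lt_one hr₀ hr₁
  have hlim := hpow.smul ((hf.tendsto _).comp (hpow.smul_const x))
  rw [zero_smul] at hlim
  exact tendsto_nhds_unique tendsto_const_nhds (hlim.congr fun n => (iterate n).symm)

lemma eq_of_eq_mul_comp_affine {w : ℝ → ℝ} (hw : Continuous w) {r H B : ℝ} (hr₀ : 0 < r)
    (hr₁ : r ≠ 1) (hwr : ∀ s, w s = r * (w (r * s + H) - B)) (a b : ℝ) : w a = w b := by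
  obtain ⟨z, hz⟩ : ∃ z, r * z + H = z :=
    ⟨H / (1 - r), by field_simp [sub_ne_zero.2 hr₁.symm]; ring⟩
  have centred : ∀ t, w (z + t) - w z = r * (w (z + r * t) - w z) := by
    intro t
    have hzt := hwr (z + t)
    have hz' := hwr z
    rw [hz] at hz'
    rw [show r * (z + t) + H = z + r * t by linear_combination hz] at hzt
    linear_combination hzt - hz'
  have eq_at_fixed_point : ∀ t, w (z + t) - w z = 0 := by
    rcases lt_or_gt_of_ne hr₁ with hr | hr
    · exact eq_zero_of_eq_smul_comp_smul (f := fun t => w (z + t) - w z) (by fun_prop) hr₀.le hr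
        centred
    · refine eq_zero_of_eq_smul_comp_smul (f := fun t => w (z + t) - w z) (by fun_prop)
        (inv_pos.2 hr₀).le (inv_lt_one_of_one_lt₀ hr) fun t => ?_
      have := centred (r⁻¹ * t)
      rw [mul_inv_cancel_left₀ hr₀.ne'] at this
      simp only [smul_eq_mul, this, inv_mul_cancel_left₀ hr₀.ne']
  have ha := eq_at_fixed_point (a - z)
  have hb := eq_at_fixed_point (b - z)
  rw [add_sub_cancel] at ha hb
  linarith

lemma addMonoidHom_eq_zero_of_bounded {A E : Type*} [AddMonoid A] [NormedAddCommGroup E]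
    [NormedSpace ℝ E] (f : A →+ E) {M : ℝ} (hM : ∀ x, ‖f x‖ ≤ M) : f = 0 := by
  ext x
  by_contra hx
  obtain ⟨n, hn⟩ := exists_nat_gt (M / ‖f x‖)
  rw [div_lt_iff₀ (norm_pos_iff.2 hx)] at hn
  have := hM (n • x)
  rw [map_nsmul, ← Nat.cast_smul_eq_nsmul ℝ, norm_smul, Real.norm_natCast] at this
  linarith

lemma frequently_eq_add_nat_mul_of_tendsto_atTop {c : ℝ → ℝ} {a b H : ℝ} (hab : a < b)
    (hH : 0 < H) (hc : ContinuousOn c (Ioo a b)) (hlim : Tendsto c (𝓝[>] a) atTop) (t : ℝ) :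
    ∃ᶠ x in 𝓝[>] a, ∃ n : ℕ, c x = t + n * H := by
  rw [(nhdsGT_basis a).frequently_iff]
  intro d hd
  obtain ⟨y, hay, hy⟩ := exists_between (lt_min hd hab)
  obtain ⟨n, hn⟩ := exists_nat_ge ((c y - t) / H)
  rw [div_le_iff₀ hH] at hn
  obtain ⟨x, hxn, hax, hxy⟩ : ∃ x, t + n * H ≤ c x ∧ x ∈ Ioo a y :=
    ((hlim.eventually_ge_atTop (t + n * H)).and (Ioo_mem_nhdsGT hay)).exists
  have hsub : Icc x y ⊆ Ioo a b := fun z hz =>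
    ⟨hax.trans_le hz.1, hz.2.trans_lt (hy.trans_le (min_le_right _ _))⟩
  obtain ⟨z, hz, hcz⟩ := intermediate_value_Icc' hxy.le (hc.mono hsub)
    (show t + n * H ∈ Icc (c y) (c x) from ⟨by linarith, hxn⟩)
  exact ⟨z, ⟨hax.trans_le hz.1, hz.2.trans_lt (hy.trans_le (min_le_left _ _))⟩, n, hcz⟩

lemma eq_of_monotone_of_periodic {f : ℝ → ℝ} {T : ℝ} (hf : Monotone f)
    (hper : Function.Periodic f T) (hT : 0 < T) (a b : ℝ) : f a = f b := by
  have le_forall : ∀ a b, f a ≤ f b := by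
    intro a b
    obtain ⟨n, hn⟩ := exists_nat_ge ((a - b) / T)
    rw [div_le_iff₀ hT] at hn
    rw [← hper.nat_mul n b]
    exact hf (by linarith)
  exact le_antisymm (le_forall a b) (le_forall b a)

lemma integral_comp_add_right_of_periodic {E : Type*} [NormedAddCommGroup E] [NormedSpace ℝ E]
    {f : ℝ → E} {T : ℝ} (hf : Function.Periodic f T) (c : ℝ) :
    ∫ x in (0 : ℝ)..T, f (x + c) = ∫ x in (0 : ℝ)..T, f x := by
  rw [intervalIntegral.integral_comp_add_right f, zero_add, add_comm T,
    hf.intervalIntegral_add_eq c 0, zero_add]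

lemma integral_add_period_of_periodic {E : Type*} [NormedAddCommGroup E] [NormedSpace ℝ E]
    {f : ℝ → E} {T : ℝ} (hf : Function.Periodic f T)
    (hint : ∀ a b, IntervalIntegrable f volume a b) (x : ℝ) :
    ∫ t in (0 : ℝ)..x + T, f t = (∫ t in (0 : ℝ)..x, f t) + ∫ t in (0 : ℝ)..T, f t := by
  rw [← intervalIntegral.integral_add_adjacent_intervals (hint 0 x) (hint x (x + T)),
    hf.intervalIntegral_add_eq x 0, zero_add]

lemma periodic_deriv {𝕜 E : Type*} [NontriviallyNormedField 𝕜] [NormedAddCommGroup E]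
    [NormedSpace 𝕜 E] {f : 𝕜 → E} {T : 𝕜} (hf : Function.Periodic f T) :
    Function.Periodic (deriv f) T := fun x => by
  rw [← deriv_comp_add_const]
  congr 1
  exact funext hf

lemma exists_lipschitzWith_of_contDiff_of_periodic {f : ℝ → ℝ} {T : ℝ} (hf : ContDiff ℝ 1 f)
    (hper : Function.Periodic f T) (hT : T ≠ 0) : ∃ C, LipschitzWith C f := by
  obtain ⟨C, hC⟩ := ((periodic_deriv hper).isBounded_of_continuous hT
    (hf.continuous_deriv le_rfl)).exists_norm_le
  have hC0 : 0 ≤ C := (norm_nonneg _).trans (hC _ (mem_range_self 0))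
  refine ⟨⟨C, hC0⟩, lipschitzWith_of_nnnorm_deriv_le (hf.differentiable one_ne_zero) fun x => ?_⟩
  exact hC _ (mem_range_self x)

lemma locallyLipschitz_integral_of_norm_le {E : Type*} [NormedAddCommGroup E] [NormedSpace ℝ E]
    {f : ℝ → E} {g : ℝ → ℝ} (hf : ∀ a b, IntervalIntegrable f volume a b) (hg : Continuous g)
    (hfg : ∀ x, ‖f x‖ ≤ g x) (a : ℝ) : LocallyLipschitz fun x => ∫ t in a..x, f t := by
  intro x
  obtain ⟨M, hM⟩ := (isCompact_closedBall x 1).bddAbove_image hg.continuousOn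
  have hM₀ : 0 ≤ M := (norm_nonneg _).trans <| (hfg x).trans <|
    hM (mem_image_of_mem g (mem_closedBall_self zero_le_one))
  refine ⟨⟨M, hM₀⟩, closedBall x 1, closedBall_mem_nhds x one_pos,
    LipschitzOnWith.of_dist_le_mul fun y hy z hz => ?_⟩
  rw [dist_eq_norm, dist_eq_norm, intervalIntegral.integral_interval_sub_left (hf _ _) (hf _ _)]
  refine intervalIntegral.norm_integral_le_of_norm_le_const fun t ht => (hfg t).trans ?_
  exact hM (mem_image_of_mem g
    ((convex_closedBall x 1).ordConnected.uIcc_subset hz hy (uIoc_subset_uIcc ht)))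

lemma tendsto_integral_slope_mul_slope {f g : ℝ → ℝ} {Cf Cg : NNReal} (hf : LipschitzWith Cf f)
    (hg : LipschitzWith Cg g) (a b : ℝ) :
    Tendsto (fun ε => ∫ x in a..b, (ε⁻¹ * (f (x + ε) - f x)) * (ε⁻¹ * (g (x + ε) - g x)))
      (𝓝[≠] 0) (𝓝 (∫ x in a..b, deriv f x * deriv g x)) := by
  have hfc := hf.continuous
  have hgc := hg.continuous
  have slope_le : ∀ {u : ℝ → ℝ} {C : NNReal}, LipschitzWith C u → ∀ ε ≠ 0, ∀ x,
      |ε⁻¹ * (u (x + ε) - u x)| ≤ C := fun hu ε hε x => by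
    have := hu.dist_le_mul (x + ε) x
    rw [Real.dist_eq, Real.dist_eq, add_sub_cancel_left] at this
    rwa [abs_mul, abs_inv, inv_mul_le_iff₀ (abs_pos.2 hε), mul_comm]
  refine intervalIntegral.tendsto_integral_filter_of_dominated_convergence
    (fun _ => (Cf : ℝ) * Cg) ?_ ?_ intervalIntegrable_const ?_
  · exact .of_forall fun ε => Continuous.aestronglyMeasurable (by fun_prop)
  · filter_upwards [self_mem_nhdsWithin] with ε hε
    refine .of_forall fun x _ => ?_
    rw [Real.norm_eq_abs, abs_mul]
    exact mul_le_mul (slope_le hf ε hε x) (slope_le hg ε hε x) (abs_nonneg _) Cf.coe_nonneg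
  · filter_upwards [hf.ae_differentiableAt_real, hg.ae_differentiableAt_real] with x hfx hgx _
    exact (hasDerivAt_iff_tendsto_slope_zero.1 hfx.hasDerivAt).mul
      (hasDerivAt_iff_tendsto_slope_zero.1 hgx.hasDerivAt)

lemma eventually_sin_ne_zero : ∀ᶠ η in 𝓝[>] (0 : ℝ), Real.sin η ≠ 0 := by
  filter_upwards [Ioo_mem_nhdsGT Real.pi_pos] with η hη
  exact (Real.sin_pos_of_pos_of_lt_pi hη.1 hη.2).ne'

lemma tendsto_div_sin_of_hasDerivAt {f : ℝ → ℝ} {f' : ℝ} (hf : HasDerivAt f f' 0)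
    (hf₀ : f 0 = 0) : Tendsto (fun η => f η / Real.sin η) (𝓝[>] 0) (𝓝 f') := by
  simpa using (tendsto_div_of_hasDerivAt hf (Real.hasDerivAt_sin 0) hf₀ Real.sin_zero
    (by simp)).mono_left (nhdsGT_le_nhdsNE 0)

end RealAnalysis

section PlanarSupportFunction

open MeasureTheory Filter Topology

/-- `σ` is the support function of a planar convex body with the origin in its interior, as a
function of the polar angle. The last field is the polar form of convexity: it bounds the distance
of the common point of the support lines at `φ ± ε` in the direction `φ`. -/
structure IsPlanarSupportFunction (σ : ℝ → ℝ) : Prop where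
  lipschitz : ∃ C, LipschitzWith C σ
  periodic : Function.Periodic σ (2 * Real.pi)
  pos : ∀ φ, 0 < σ φ
  two_mul_cos_mul_le : ∀ φ ε, 2 * Real.cos ε * σ φ ≤ σ (φ + ε) + σ (φ - ε)

namespace IsPlanarSupportFunction

variable {σ : ℝ → ℝ}

lemma continuous (hσ : IsPlanarSupportFunction σ) : Continuous σ :=
  hσ.lipschitz.choose_spec.continuous

lemma second_difference_le (hσ : IsPlanarSupportFunction σ) (φ ε : ℝ) :
    2 * σ φ - σ (φ + ε) - σ (φ - ε) ≤ ε ^ 2 * σ φ := by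
  nlinarith [hσ.two_mul_cos_mul_le φ ε, Real.one_sub_sq_div_two_le_cos (x := ε), hσ.pos φ]

lemma integral_slope_mul_slope_le (hσ : IsPlanarSupportFunction σ) {f : ℝ → ℝ}
    (hf : Continuous f) (hper : Function.Periodic f (2 * Real.pi)) (hf₀ : ∀ φ, 0 ≤ f φ)
    {ε : ℝ} (hε : ε ≠ 0) :
    ∫ φ in (0 : ℝ)..2 * Real.pi, (ε⁻¹ * (f (φ + ε) - f φ)) * (ε⁻¹ * (σ (φ + ε) - σ φ)) ≤
      ∫ φ in (0 : ℝ)..2 * Real.pi, f φ * σ φ := by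
  have hσc := hσ.continuous
  have integrable : ∀ {u : ℝ → ℝ}, Continuous u → IntervalIntegrable u volume 0 (2 * Real.pi) :=
    fun hu => hu.intervalIntegrable _ _
  have summation_by_parts : ∫ φ in (0 : ℝ)..2 * Real.pi, f (φ + ε) * (σ (φ + ε) - σ φ) =
      ∫ φ in (0 : ℝ)..2 * Real.pi, f φ * (σ φ - σ (φ - ε)) := by
    have hp : Function.Periodic (fun φ => f φ * (σ φ - σ (φ - ε))) (2 * Real.pi) := fun φ => by
      simp only [hper φ, hσ.periodic φ, add_sub_right_comm, hσ.periodic (φ - ε)]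
    simpa using integral_comp_add_right_of_periodic hp ε
  calc
    _ = ε⁻¹ ^ 2 * ((∫ φ in (0 : ℝ)..2 * Real.pi, f (φ + ε) * (σ (φ + ε) - σ φ)) -
          ∫ φ in (0 : ℝ)..2 * Real.pi, f φ * (σ (φ + ε) - σ φ)) := by
      rw [← intervalIntegral.integral_sub (integrable (by fun_prop)) (integrable (by fun_prop)),
        ← intervalIntegral.integral_const_mul]
      exact intervalIntegral.integral_congr fun φ _ => by ring
    _ = ∫ φ in (0 : ℝ)..2 * Real.pi,
          f φ * (ε⁻¹ ^ 2 * (2 * σ φ - σ (φ + ε) - σ (φ - ε))) := by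
      rw [summation_by_parts, ← intervalIntegral.integral_sub (integrable (by fun_prop))
        (integrable (by fun_prop)), ← intervalIntegral.integral_const_mul]
      exact intervalIntegral.integral_congr fun φ _ => by ring
    _ ≤ _ := by
      refine intervalIntegral.integral_mono_on Real.two_pi_pos.le (integrable (by fun_prop))
        (integrable (by fun_prop)) fun φ _ => mul_le_mul_of_nonneg_left ?_ (hf₀ φ)
      rw [inv_pow, inv_mul_le_iff₀ (by positivity)]
      exact hσ.second_difference_le φ ε

lemma integral_deriv_mul_deriv_le (hσ : IsPlanarSupportFunction σ) {f : ℝ → ℝ} {C : NNReal}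
    (hf : LipschitzWith C f) (hper : Function.Periodic f (2 * Real.pi)) (hf₀ : ∀ φ, 0 ≤ f φ) :
    ∫ φ in (0 : ℝ)..2 * Real.pi, deriv f φ * deriv σ φ ≤
      ∫ φ in (0 : ℝ)..2 * Real.pi, f φ * σ φ :=
  le_of_tendsto (tendsto_integral_slope_mul_slope hf hσ.lipschitz.choose_spec _ _) <|
    eventually_mem_nhdsWithin.mono fun _ hε =>
      hσ.integral_slope_mul_slope_le hf.continuous hper hf₀ hε

lemma locallyIntegrable_mul_deriv (hσ : IsPlanarSupportFunction σ) {f : ℝ → ℝ}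
    (hf : Continuous f) : LocallyIntegrable (fun φ => f φ * deriv σ φ) volume := by
  obtain ⟨C, hC⟩ := hσ.lipschitz
  have hbdd : LocallyIntegrable (fun φ => f φ * C) volume :=
    (hf.mul continuous_const).locallyIntegrable
  refine hbdd.mono (hf.measurable.mul (measurable_deriv σ)).aestronglyMeasurable
    (.of_forall fun φ => ?_)
  rw [norm_mul, norm_mul, Real.norm_of_nonneg C.coe_nonneg]
  gcongr
  exact norm_deriv_le_of_lipschitz hC

end IsPlanarSupportFunction

end PlanarSupportFunction

section RotatingFrame

/-- The unit vector at angle `φ` of the plane with frame `(e₁, e₂)`. -/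
def radial {V : Type*} [AddCommGroup V] [Module ℝ V] (e₁ e₂ : V) (φ : ℝ) : V :=
  Real.cos φ • e₁ + Real.sin φ • e₂

/-- The quarter turn of `radial e₁ e₂ φ`, which is also its derivative in `φ`. -/
def tangential {V : Type*} [AddCommGroup V] [Module ℝ V] (e₁ e₂ : V) (φ : ℝ) : V :=
  -Real.sin φ • e₁ + Real.cos φ • e₂

/-- The support line at angle `φ` of the planar body with support function `σ`, parametrized by
the signed distance from the foot of the perpendicular through the origin. -/
def supportLine {V : Type*} [AddCommGroup V] [Module ℝ V] (e₁ e₂ : V) (σ : ℝ → ℝ) (φ s : ℝ) : V :=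
  σ φ • radial e₁ e₂ φ + s • tangential e₁ e₂ φ

section Module

variable {V : Type*} [AddCommGroup V] [Module ℝ V] (e₁ e₂ : V)

@[simp] lemma radial_zero : radial e₁ e₂ 0 = e₁ := by simp [radial]

@[simp] lemma tangential_zero : tangential e₁ e₂ 0 = e₂ := by simp [tangential]

@[simp] lemma radial_add_two_pi (φ : ℝ) : radial e₁ e₂ (φ + 2 * Real.pi) = radial e₁ e₂ φ := by
  simp [radial]

@[simp] lemma tangential_add_two_pi (φ : ℝ) :
    tangential e₁ e₂ (φ + 2 * Real.pi) = tangential e₁ e₂ φ := by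
  simp [tangential]

lemma radial_sub (φ δ : ℝ) : radial e₁ e₂ (φ - δ) =
    Real.cos δ • radial e₁ e₂ φ - Real.sin δ • tangential e₁ e₂ φ := by
  simp only [radial, tangential, Real.cos_sub, Real.sin_sub]
  module

lemma tangential_sub (φ δ : ℝ) : tangential e₁ e₂ (φ - δ) =
    Real.cos δ • tangential e₁ e₂ φ + Real.sin δ • radial e₁ e₂ φ := by
  simp only [radial, tangential, Real.cos_sub, Real.sin_sub]
  module

lemma supportLine_sub_eq_supportLine (σ : ℝ → ℝ) (φ : ℝ) {δ : ℝ} (hδ : Real.sin δ ≠ 0) :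
    supportLine e₁ e₂ σ (φ - δ) ((σ φ - σ (φ - δ) * Real.cos δ) / Real.sin δ) =
      supportLine e₁ e₂ σ φ ((σ φ * Real.cos δ - σ (φ - δ)) / Real.sin δ) := by
  simp only [supportLine, radial_sub, tangential_sub]
  match_scalars <;> field_simp
  · ring
  · linear_combination -σ (φ - δ) * Real.sin_sq_add_cos_sq δ

end Module

variable {V : Type*} [NormedAddCommGroup V] [NormedSpace ℝ V] (e₁ e₂ : V)

lemma hasDerivAt_radial (φ : ℝ) : HasDerivAt (radial e₁ e₂) (tangential e₁ e₂ φ) φ :=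
  ((Real.hasDerivAt_cos φ).smul_const e₁).add ((Real.hasDerivAt_sin φ).smul_const e₂)

lemma hasDerivAt_tangential (φ : ℝ) : HasDerivAt (tangential e₁ e₂) (-radial e₁ e₂ φ) φ := by
  refine (((Real.hasDerivAt_sin φ).neg.smul_const e₁).add
    ((Real.hasDerivAt_cos φ).smul_const e₂)).congr_deriv ?_
  simp only [radial]
  module

@[fun_prop]
lemma contDiff_radial : ContDiff ℝ 1 (radial e₁ e₂) := by
  have := Real.contDiff_cos (n := 1)
  have := Real.contDiff_sin (n := 1)
  unfold radial
  fun_prop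

@[fun_prop]
lemma contDiff_tangential : ContDiff ℝ 1 (tangential e₁ e₂) := by
  have := Real.contDiff_cos (n := 1)
  have := Real.contDiff_sin (n := 1)
  unfold tangential
  fun_prop

lemma hasDerivAt_supportLine (σ : ℝ → ℝ) (φ s : ℝ) :
    HasDerivAt (supportLine e₁ e₂ σ φ) (tangential e₁ e₂ φ) s := by
  unfold supportLine
  simpa using ((hasDerivAt_id s).smul_const (tangential e₁ e₂ φ)).const_add (σ φ • radial e₁ e₂ φ)

end RotatingFrame

section SupportLineSystem

open MeasureTheory Filter Topology

/-- A `C¹` convex function `G` with gradient `D`, together with a planar support function `σ`, such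
that along each support line the gradient, read in the rotating frame, stays on the affine line
`{(u, v) | u + κ φ * v = h φ}` without being constant. -/
structure SupportLineSystem (V : Type*) [NormedAddCommGroup V] [NormedSpace ℝ V] where
  (G : V → ℝ) (D : V → StrongDual ℝ V) (e₁ e₂ : V) (σ κ h : ℝ → ℝ)
  continuous_D : Continuous D
  subgradient : ∀ g g', G g + D g (g' - g) ≤ G g'
  isPlanarSupportFunction : IsPlanarSupportFunction σ
  conjugate : ∀ φ s, D (supportLine e₁ e₂ σ φ s) (radial e₁ e₂ φ) +
    κ φ * D (supportLine e₁ e₂ σ φ s) (tangential e₁ e₂ φ) = h φ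
  exists_slope_ne : ∀ φ, ∃ s₁ s₂, D (supportLine e₁ e₂ σ φ s₁) (tangential e₁ e₂ φ) ≠
    D (supportLine e₁ e₂ σ φ s₂) (tangential e₁ e₂ φ)

namespace SupportLineSystem

variable {V : Type*} [NormedAddCommGroup V] [NormedSpace ℝ V] (S : SupportLineSystem V)

/-- The support line of `S` at angle `φ`. -/
def line (φ s : ℝ) : V := supportLine S.e₁ S.e₂ S.σ φ s

/-- The derivative of `S.G` along its support line at angle `φ`. -/
def slope (φ s : ℝ) : ℝ := S.D (S.line φ s) (tangential S.e₁ S.e₂ φ)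

/-- The derivative of `S.G` across its support line at angle `φ`. -/
def normalSlope (φ s : ℝ) : ℝ := S.D (S.line φ s) (radial S.e₁ S.e₂ φ)

lemma normalSlope_add (φ s : ℝ) : S.normalSlope φ s + S.κ φ * S.slope φ s = S.h φ :=
  S.conjugate φ s

lemma exists_slope_sub_ne_zero (φ : ℝ) : ∃ s₁ s₂, S.slope φ s₁ - S.slope φ s₂ ≠ 0 :=
  (S.exists_slope_ne φ).imp fun _ => .imp fun _ => sub_ne_zero.2

lemma κ_mul_slope_sub (φ s₁ s₂ : ℝ) :
    S.κ φ * (S.slope φ s₁ - S.slope φ s₂) = S.normalSlope φ s₂ - S.normalSlope φ s₁ := by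
  linarith [S.normalSlope_add φ s₁, S.normalSlope_add φ s₂]

@[fun_prop]
lemma continuous_σ : Continuous S.σ := S.isPlanarSupportFunction.continuous

lemma periodic_σ : Function.Periodic S.σ (2 * Real.pi) := S.isPlanarSupportFunction.periodic

lemma σ_pos (φ : ℝ) : 0 < S.σ φ := S.isPlanarSupportFunction.pos φ

lemma continuous_line : Continuous fun q : ℝ × ℝ => S.line q.1 q.2 := by
  unfold line supportLine
  fun_prop

lemma continuous_slope : Continuous fun q : ℝ × ℝ => S.slope q.1 q.2 :=
  (S.continuous_D.comp S.continuous_line).clm_apply (by fun_prop)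

lemma continuous_normalSlope : Continuous fun q : ℝ × ℝ => S.normalSlope q.1 q.2 :=
  (S.continuous_D.comp S.continuous_line).clm_apply (by fun_prop)

@[fun_prop]
lemma continuous_slope_left (s : ℝ) : Continuous fun φ => S.slope φ s :=
  S.continuous_slope.comp (by fun_prop : Continuous fun φ => (φ, s))

@[fun_prop]
lemma continuous_slope_right (φ : ℝ) : Continuous (S.slope φ) :=
  S.continuous_slope.comp (by fun_prop : Continuous fun s => (φ, s))

@[fun_prop]
lemma continuous_normalSlope_left (s : ℝ) : Continuous fun φ => S.normalSlope φ s :=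
  S.continuous_normalSlope.comp (by fun_prop : Continuous fun φ => (φ, s))

@[fun_prop]
lemma continuous_κ : Continuous S.κ := by
  refine continuous_iff_continuousAt.2 fun φ₀ => ?_
  obtain ⟨s₁, s₂, hs⟩ := S.exists_slope_sub_ne_zero φ₀
  have hc : Continuous fun φ => S.slope φ s₁ - S.slope φ s₂ := by fun_prop
  have hd : Continuous fun φ => S.normalSlope φ s₂ - S.normalSlope φ s₁ := by fun_prop
  refine (hd.continuousAt.div hc.continuousAt hs).congr ?_
  filter_upwards [hc.continuousAt.eventually_ne hs] with φ hφ
  rw [Pi.div_apply, ← S.κ_mul_slope_sub, mul_div_cancel_right₀ _ hφ]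

@[fun_prop]
lemma continuous_h : Continuous S.h := by
  rw [show S.h = fun φ => S.normalSlope φ 0 + S.κ φ * S.slope φ 0 from
    funext fun φ => (S.normalSlope_add φ 0).symm]
  fun_prop

lemma slope_add_two_pi (φ s : ℝ) : S.slope (φ + 2 * Real.pi) s = S.slope φ s := by
  simp [slope, line, supportLine, S.periodic_σ φ]

lemma normalSlope_add_two_pi (φ s : ℝ) :
    S.normalSlope (φ + 2 * Real.pi) s = S.normalSlope φ s := by
  simp [normalSlope, line, supportLine, S.periodic_σ φ]

lemma periodic_κ : Function.Periodic S.κ (2 * Real.pi) := by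
  intro φ
  obtain ⟨s₁, s₂, hs⟩ := S.exists_slope_sub_ne_zero φ
  refine mul_right_cancel₀ hs ?_
  rw [S.κ_mul_slope_sub, ← S.slope_add_two_pi φ, ← S.slope_add_two_pi φ, S.κ_mul_slope_sub,
    S.normalSlope_add_two_pi, S.normalSlope_add_two_pi]

lemma hasFDerivAt_G (g : V) : HasFDerivAt S.G (S.D g) g :=
  hasFDerivAt_of_continuous_subgradient S.continuous_D S.subgradient g

lemma contDiff_G : ContDiff ℝ 1 S.G :=
  contDiff_one_iff_hasFDerivAt.2 ⟨S.D, S.continuous_D, S.hasFDerivAt_G⟩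

lemma hasDerivAt_G_line (φ s : ℝ) : HasDerivAt (fun s => S.G (S.line φ s)) (S.slope φ s) s :=
  (S.hasFDerivAt_G _).comp_hasDerivAt s (hasDerivAt_supportLine S.e₁ S.e₂ S.σ φ s)

lemma monotone_slope (φ : ℝ) : Monotone (S.slope φ) := by
  intro s s' hs
  rcases hs.eq_or_lt with rfl | hs
  · rfl
  have hsub : ∀ a b, S.line φ b - S.line φ a = (b - a) • tangential S.e₁ S.e₂ φ := fun a b => by
    simp only [line, supportLine]
    module
  have hle := S.subgradient (S.line φ s) (S.line φ s')
  have hge := S.subgradient (S.line φ s') (S.line φ s)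
  simp only [hsub, map_smul, smul_eq_mul] at hle hge
  change _ + _ * S.slope φ s ≤ _ at hle
  change _ + _ * S.slope φ s' ≤ _ at hge
  exact le_of_mul_le_mul_left (by linarith) (sub_pos.2 hs)

/-- The exponential integrating factor of `κ`. -/
def scale (φ : ℝ) : ℝ := Real.exp (∫ t in (0 : ℝ)..φ, S.κ t)

/-- The translation part of the characteristic flow: the characteristic through `(0, c)` reaches
angle `φ` at the parameter `(c - S.shift φ) / S.scale φ`. -/
def shift (φ : ℝ) : ℝ :=
  ∫ t in (0 : ℝ)..φ, (S.scale t * S.σ t - S.scale t * S.κ t * deriv S.σ t)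

/-- The amount by which the slope, rescaled by `S.scale`, drops along a characteristic. -/
def drift (φ : ℝ) : ℝ := ∫ t in (0 : ℝ)..φ, S.h t / S.scale t

lemma scale_pos (φ : ℝ) : 0 < S.scale φ := Real.exp_pos _

lemma hasDerivAt_scale (φ : ℝ) : HasDerivAt S.scale (S.scale φ * S.κ φ) φ :=
  (S.continuous_κ.integral_hasStrictDerivAt 0 φ).hasDerivAt.exp

@[fun_prop]
lemma continuous_scale : Continuous S.scale :=
  continuous_iff_continuousAt.2 fun φ => (S.hasDerivAt_scale φ).continuousAt

lemma contDiff_scale : ContDiff ℝ 1 S.scale := by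
  refine contDiff_one_iff_deriv.2 ⟨fun φ => (S.hasDerivAt_scale φ).differentiableAt, ?_⟩
  rw [show deriv S.scale = fun φ => S.scale φ * S.κ φ from
    funext fun φ => (S.hasDerivAt_scale φ).deriv]
  fun_prop

lemma hasDerivAt_drift (φ : ℝ) : HasDerivAt S.drift (S.h φ / S.scale φ) φ :=
  ((S.continuous_h.div S.continuous_scale fun t =>
    (S.scale_pos t).ne').integral_hasStrictDerivAt 0 φ).hasDerivAt

@[fun_prop]
lemma continuous_drift : Continuous S.drift :=
  continuous_iff_continuousAt.2 fun φ => (S.hasDerivAt_drift φ).continuousAt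

lemma locallyLipschitz_drift : LocallyLipschitz S.drift := by
  refine ContDiff.locallyLipschitz (𝕂 := ℝ) <| contDiff_one_iff_deriv.2
    ⟨fun φ => (S.hasDerivAt_drift φ).differentiableAt, ?_⟩
  rw [show deriv S.drift = fun φ => S.h φ / S.scale φ from
    funext fun φ => (S.hasDerivAt_drift φ).deriv]
  exact S.continuous_h.div S.continuous_scale fun t => (S.scale_pos t).ne'

lemma locallyIntegrable_deriv_shift :
    LocallyIntegrable (fun t => S.scale t * S.σ t - S.scale t * S.κ t * deriv S.σ t) volume :=
  (S.continuous_scale.mul S.continuous_σ).locallyIntegrable.sub <|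
    S.isPlanarSupportFunction.locallyIntegrable_mul_deriv
      (S.continuous_scale.mul S.continuous_κ)

lemma intervalIntegrable_deriv_shift (a b : ℝ) : IntervalIntegrable
    (fun t => S.scale t * S.σ t - S.scale t * S.κ t * deriv S.σ t) volume a b :=
  (S.locallyIntegrable_deriv_shift.integrableOn_isCompact isCompact_uIcc).intervalIntegrable

lemma ae_hasDerivAt_shift : ∀ᵐ φ, HasDerivAt S.shift
    (S.scale φ * S.σ φ - S.scale φ * S.κ φ * deriv S.σ φ) φ := by
  filter_upwards [_root_.LocallyIntegrable.ae_hasDerivAt_integral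
    S.locallyIntegrable_deriv_shift] with φ hφ using hφ 0

lemma locallyLipschitz_shift : LocallyLipschitz S.shift := by
  obtain ⟨C, hC⟩ := S.isPlanarSupportFunction.lipschitz
  refine locallyLipschitz_integral_of_norm_le S.intervalIntegrable_deriv_shift
    (g := fun t => |S.scale t * S.σ t| + |S.scale t * S.κ t| * C) (by fun_prop) (fun t => ?_) 0
  refine (norm_sub_le _ _).trans (add_le_add le_rfl ?_)
  rw [norm_mul]
  exact mul_le_mul_of_nonneg_left (norm_deriv_le_of_lipschitz hC) (norm_nonneg _)

@[fun_prop]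
lemma continuous_shift : Continuous S.shift := S.locallyLipschitz_shift.continuous

/-- The parameter at angle `φ` of the characteristic through `(0, c)`. -/
def characteristic (c φ : ℝ) : ℝ := (c - S.shift φ) / S.scale φ

lemma hasDerivAt_characteristic (c : ℝ) {φ : ℝ}
    (hshift : HasDerivAt S.shift (S.scale φ * S.σ φ - S.scale φ * S.κ φ * deriv S.σ φ) φ) :
    HasDerivAt (S.characteristic c)
      (S.κ φ * (deriv S.σ φ - S.characteristic c φ) - S.σ φ) φ := by
  have hne := (S.scale_pos φ).ne'
  refine ((hshift.const_sub c).div (S.hasDerivAt_scale φ) hne).congr_deriv ?_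
  unfold characteristic
  field_simp
  ring

lemma locallyLipschitz_characteristic (c : ℝ) : LocallyLipschitz (S.characteristic c) := by
  have hdiv : ContDiff ℝ 1 fun q : ℝ × ℝ => (c - q.2) / S.scale q.1 :=
    (contDiff_const.sub contDiff_snd).div (S.contDiff_scale.comp contDiff_fst)
      fun q => (S.scale_pos q.1).ne'
  exact hdiv.locallyLipschitz.comp (LocallyLipschitz.id.prodMk S.locallyLipschitz_shift)

lemma locallyLipschitz_G_characteristic (c : ℝ) :
    LocallyLipschitz fun φ => S.G (S.line φ (S.characteristic c φ)) := by
  have hline : ContDiff ℝ 1 fun q : ℝ × ℝ × ℝ => S.G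
      (q.2.1 • radial S.e₁ S.e₂ q.1 + q.2.2 • tangential S.e₁ S.e₂ q.1) := by
    have := S.contDiff_G
    fun_prop
  exact hline.locallyLipschitz.comp (LocallyLipschitz.id.prodMk
    (S.isPlanarSupportFunction.lipschitz.choose_spec.locallyLipschitz.prodMk
      (S.locallyLipschitz_characteristic c)))

lemma hasDerivAt_G_characteristic (c : ℝ) {φ : ℝ} (hσ : DifferentiableAt ℝ S.σ φ)
    (hshift : HasDerivAt S.shift (S.scale φ * S.σ φ - S.scale φ * S.κ φ * deriv S.σ φ) φ) :
    HasDerivAt (fun φ => S.G (S.line φ (S.characteristic c φ)))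
      ((deriv S.σ φ - S.characteristic c φ) * S.h φ) φ := by
  have hline : HasDerivAt (fun φ => S.line φ (S.characteristic c φ))
      ((deriv S.σ φ - S.characteristic c φ) •
        (radial S.e₁ S.e₂ φ + S.κ φ • tangential S.e₁ S.e₂ φ)) φ := by
    refine ((hσ.hasDerivAt.smul (hasDerivAt_radial S.e₁ S.e₂ φ)).add
      ((S.hasDerivAt_characteristic c hshift).smul
        (hasDerivAt_tangential S.e₁ S.e₂ φ))).congr_deriv ?_
    module
  refine ((S.hasFDerivAt_G _).comp_hasDerivAt φ hline).congr_deriv ?_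
  rw [map_smul, map_add, map_smul, ← S.normalSlope_add φ (S.characteristic c φ)]
  rfl

-- The derivative `(σ' - s) h` of `G` along a characteristic depends on the characteristic only
-- through `s`, so the difference along two of them is explicit.
lemma G_characteristic_sub (c φ : ℝ) :
    S.G (S.line φ (S.characteristic c φ)) - S.G (S.line φ (S.characteristic 0 φ)) + c * S.drift φ =
      S.G (S.line 0 c) - S.G (S.line 0 0) := by
  have hlip : LocallyLipschitz fun φ => S.G (S.line φ (S.characteristic c φ)) -
      S.G (S.line φ (S.characteristic 0 φ)) + c * S.drift φ := by
    have hcomb : ContDiff ℝ 1 fun q : ℝ × ℝ × ℝ => q.1 - q.2.1 + c * q.2.2 := by fun_prop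
    exact hcomb.locallyLipschitz.comp ((S.locallyLipschitz_G_characteristic c).prodMk
      ((S.locallyLipschitz_G_characteristic 0).prodMk S.locallyLipschitz_drift))
  rw [eq_of_locallyLipschitz_of_ae_hasDerivAt_zero hlip ?_ φ 0]
  · simp [characteristic, shift, scale, drift]
  filter_upwards [S.ae_hasDerivAt_shift,
    S.isPlanarSupportFunction.lipschitz.choose_spec.ae_differentiableAt_real] with φ hshift hσ
  refine (((S.hasDerivAt_G_characteristic c hσ hshift).sub
    (S.hasDerivAt_G_characteristic 0 hσ hshift)).add
      ((S.hasDerivAt_drift φ).const_mul c)).congr_deriv ?_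
  unfold characteristic
  ring

lemma slope_eq (φ s : ℝ) : S.slope φ s =
    S.scale φ * (S.slope 0 (S.scale φ * s + S.shift φ) - S.drift φ) := by
  have hne := (S.scale_pos φ).ne'
  set c := S.scale φ * s + S.shift φ with hc
  have hcs : S.characteristic c φ = s := by rw [characteristic, hc]; field_simp; ring
  have hchar : HasDerivAt (fun c => S.characteristic c φ) (S.scale φ)⁻¹ c := by
    simpa [characteristic, div_eq_mul_inv] using
      ((hasDerivAt_id c).sub_const (S.shift φ)).mul_const (S.scale φ)⁻¹
  have hG := (((S.hasDerivAt_G_line φ s).comp_of_eq c hchar hcs.symm).sub_const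
    (S.G (S.line φ (S.characteristic 0 φ)))).add ((hasDerivAt_id c).mul_const (S.drift φ))
  have hG₀ := (S.hasDerivAt_G_line 0 c).sub_const (S.G (S.line 0 0))
  rw [funext fun c => (S.G_characteristic_sub c φ).symm] at hG₀
  rw [hG₀.unique hG]
  field_simp
  ring

lemma scale_two_pi : S.scale (2 * Real.pi) = 1 := by
  by_contra hne
  obtain ⟨s₁, s₂, hs⟩ := S.exists_slope_sub_ne_zero 0
  refine hs (sub_eq_zero.2 (eq_of_eq_mul_comp_affine (S.continuous_slope_right 0) (S.scale_pos _)
    hne (H := S.shift (2 * Real.pi)) (B := S.drift (2 * Real.pi)) (fun s => ?_) _ _))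
  rw [← S.slope_eq, ← S.slope_add_two_pi 0, zero_add]

lemma periodic_scale : Function.Periodic S.scale (2 * Real.pi) := fun φ => by
  have := S.scale_two_pi
  unfold scale at *
  rw [integral_add_period_of_periodic S.periodic_κ
    (fun a b => S.continuous_κ.intervalIntegrable a b), Real.exp_add, this, mul_one]

lemma slope_zero_add_shift (s : ℝ) : S.slope 0 (s + S.shift (2 * Real.pi)) =
    S.slope 0 s + S.drift (2 * Real.pi) := by
  have := S.slope_eq (2 * Real.pi) s
  rw [S.scale_two_pi, one_mul, one_mul, ← zero_add (2 * Real.pi), S.slope_add_two_pi,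
    zero_add] at this
  linarith

lemma shift_two_pi_eq (m : ℝ) : S.shift (2 * Real.pi) =
    (∫ φ in (0 : ℝ)..2 * Real.pi, (S.scale φ - m) * S.σ φ) +
      (∫ φ in (0 : ℝ)..2 * Real.pi, m * S.σ φ) -
      ∫ φ in (0 : ℝ)..2 * Real.pi, deriv (fun φ => S.scale φ - m) φ * deriv S.σ φ := by
  have hderiv : deriv (fun φ => S.scale φ - m) = fun φ => S.scale φ * S.κ φ :=
    funext fun φ => ((S.hasDerivAt_scale φ).sub_const m).deriv
  have integrable : ∀ {u : ℝ → ℝ}, Continuous u → IntervalIntegrable u volume 0 (2 * Real.pi) :=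
    fun hu => hu.intervalIntegrable _ _
  have hint : IntervalIntegrable (fun φ => S.scale φ * S.κ φ * deriv S.σ φ) volume 0
      (2 * Real.pi) :=
    ((S.isPlanarSupportFunction.locallyIntegrable_mul_deriv
      (f := fun φ => S.scale φ * S.κ φ) (by fun_prop)).integrableOn_isCompact
        isCompact_uIcc).intervalIntegrable
  rw [hderiv, ← intervalIntegral.integral_add (integrable (by fun_prop))
    (integrable (by fun_prop)), ← intervalIntegral.integral_sub (integrable (by fun_prop)) hint]
  exact intervalIntegral.integral_congr fun φ _ => by ring

-- Subtracting the minimum `m` of `scale` before applying the convexity of the planar body leaves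
-- the surplus `∫ m σ`.
lemma shift_two_pi_pos : 0 < S.shift (2 * Real.pi) := by
  obtain ⟨m, hm₀, hm⟩ : ∃ m, 0 < m ∧ ∀ φ, m ≤ S.scale φ := by
    obtain ⟨φ₀, -, h₀⟩ := (isCompact_Icc (a := (0 : ℝ)) (b := 2 * Real.pi)).exists_isMinOn
      (nonempty_Icc.2 Real.two_pi_pos.le) S.continuous_scale.continuousOn
    refine ⟨S.scale φ₀, S.scale_pos _, fun φ => ?_⟩
    obtain ⟨y, hy, he⟩ := S.periodic_scale.exists_mem_Ico₀ Real.two_pi_pos φ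
    exact he ▸ h₀ (Ico_subset_Icc_self hy)
  have hper : Function.Periodic (fun φ => S.scale φ - m) (2 * Real.pi) := fun φ => by
    simp only [S.periodic_scale φ]
  obtain ⟨C, hC⟩ := exists_lipschitzWith_of_contDiff_of_periodic
    (S.contDiff_scale.sub contDiff_const) hper Real.two_pi_pos.ne'
  have hle := S.isPlanarSupportFunction.integral_deriv_mul_deriv_le hC hper
    fun φ => sub_nonneg.2 (hm φ)
  have hpos : 0 < ∫ φ in (0 : ℝ)..2 * Real.pi, m * S.σ φ :=
    intervalIntegral.intervalIntegral_pos_of_pos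
      ((continuous_const.mul S.continuous_σ).intervalIntegrable _ _)
      (fun φ => mul_pos hm₀ (S.σ_pos φ)) Real.two_pi_pos
  linarith [S.shift_two_pi_eq m]

lemma drift_two_pi_pos : 0 < S.drift (2 * Real.pi) := by
  have hshift := S.shift_two_pi_pos
  have hle : 0 ≤ S.drift (2 * Real.pi) := by
    have := S.monotone_slope 0 (show (0 : ℝ) ≤ 0 + S.shift (2 * Real.pi) by linarith)
    linarith [S.slope_zero_add_shift 0]
  refine hle.lt_of_ne fun hzero => ?_
  obtain ⟨s₁, s₂, hs⟩ := S.exists_slope_sub_ne_zero 0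
  refine hs (sub_eq_zero.2
    (eq_of_monotone_of_periodic (S.monotone_slope 0) (fun s => ?_) hshift _ _))
  rw [S.slope_zero_add_shift, ← hzero, add_zero]

lemma line_eq_line_antipodal (φ : ℝ) {η : ℝ} (hη : Real.sin η ≠ 0) :
    S.line φ (-(S.σ (φ + Real.pi + η) + S.σ φ * Real.cos η) / Real.sin η) =
      S.line (φ + Real.pi + η) ((S.σ φ + S.σ (φ + Real.pi + η) * Real.cos η) / Real.sin η) := by
  have h := supportLine_sub_eq_supportLine S.e₁ S.e₂ S.σ (φ + Real.pi + η) (δ := Real.pi + η)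
    (by rwa [add_comm, Real.sin_add_pi, neg_ne_zero])
  rw [add_assoc, add_sub_cancel_right, ← add_assoc, add_comm Real.pi η, Real.sin_add_pi,
    Real.cos_add_pi] at h
  unfold line
  convert h using 2 <;> (field_simp; ring)

lemma slope_eq_antipodal (φ : ℝ) {η : ℝ} (hη : Real.sin η ≠ 0) :
    S.slope φ (-(S.σ (φ + Real.pi + η) + S.σ φ * Real.cos η) / Real.sin η) =
      -S.slope (φ + Real.pi + η) ((S.σ φ + S.σ (φ + Real.pi + η) * Real.cos η) / Real.sin η) *
        (Real.cos η - S.κ (φ + Real.pi + η) * Real.sin η) -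
      S.h (φ + Real.pi + η) * Real.sin η := by
  have htan := tangential_sub S.e₁ S.e₂ (φ + Real.pi + η) (Real.pi + η)
  rw [add_assoc, add_sub_cancel_right, ← add_assoc, add_comm Real.pi η, Real.sin_add_pi,
    Real.cos_add_pi] at htan
  rw [slope, S.line_eq_line_antipodal φ hη, htan, map_add, map_smul, map_smul, smul_eq_mul,
    smul_eq_mul, ← S.normalSlope_add (φ + Real.pi + η)
      ((S.σ φ + S.σ (φ + Real.pi + η) * Real.cos η) / Real.sin η), slope, normalSlope]
  ring

/-- The average growth rate of the slope along the support line at angle `0`. -/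
def rate : ℝ := S.drift (2 * Real.pi) / S.shift (2 * Real.pi)

/-- The deviation of the slope along the support line at angle `0` from linear growth. -/
def ripple (c : ℝ) : ℝ := S.slope 0 c - S.rate * c

lemma rate_pos : 0 < S.rate := div_pos S.drift_two_pi_pos S.shift_two_pi_pos

@[fun_prop]
lemma continuous_ripple : Continuous S.ripple := by
  unfold ripple
  fun_prop

lemma periodic_ripple : Function.Periodic S.ripple (S.shift (2 * Real.pi)) := fun c => by
  have hrate : S.rate * S.shift (2 * Real.pi) = S.drift (2 * Real.pi) :=
    div_mul_cancel₀ _ S.shift_two_pi_pos.ne'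
  rw [ripple, ripple, S.slope_zero_add_shift, mul_add, hrate]
  ring

lemma exists_abs_ripple_le : ∃ M, ∀ c, |S.ripple c| ≤ M := by
  obtain ⟨M, hM⟩ := (S.periodic_ripple.isBounded_of_continuous S.shift_two_pi_pos.ne'
    S.continuous_ripple).exists_norm_le
  exact ⟨M, fun c => hM _ (mem_range_self c)⟩

/-- The point where the support lines at angles `φ` and `φ + π + η` meet, as seen on the first of
them, in the coordinate `S.scale φ * s + S.shift φ` transported to angle `0`. -/
def meetFst (φ η : ℝ) : ℝ :=
  S.scale φ * (-(S.σ (φ + Real.pi + η) + S.σ φ * Real.cos η) / Real.sin η) + S.shift φ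

/-- The point where the support lines at angles `φ` and `φ + π + η` meet, as seen on the second of
them, in the same transported coordinate as `meetFst`. -/
def meetSnd (φ η : ℝ) : ℝ :=
  S.scale (φ + Real.pi + η) *
    ((S.σ φ + S.σ (φ + Real.pi + η) * Real.cos η) / Real.sin η) + S.shift (φ + Real.pi + η)

lemma scale_mul_slope_meetFst (φ : ℝ) {η : ℝ} (hη : Real.sin η ≠ 0) :
    S.scale φ * (S.slope 0 (S.meetFst φ η) - S.drift φ) =
      -(S.scale (φ + Real.pi + η) *
          (S.slope 0 (S.meetSnd φ η) - S.drift (φ + Real.pi + η))) *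
        (Real.cos η - S.κ (φ + Real.pi + η) * Real.sin η) -
      S.h (φ + Real.pi + η) * Real.sin η := by
  have h := S.slope_eq_antipodal φ hη
  rwa [S.slope_eq, S.slope_eq (φ + Real.pi + η)] at h

lemma tendsto_mul_meetFst (φ : ℝ) : Tendsto (fun η => η * S.meetFst φ η) (𝓝[>] 0)
    (𝓝 (-(S.scale φ * (S.σ φ + S.σ (φ + Real.pi))))) := by
  have hcont : Continuous fun η =>
      S.scale φ * -(S.σ (φ + Real.pi + η) + S.σ φ * Real.cos η) := by fun_prop
  have hshift : Continuous fun η => η * S.shift φ := by fun_prop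
  have hlim := ((tendsto_div_sin_of_hasDerivAt (hasDerivAt_id 0) rfl).mul
    (hcont.continuousWithinAt (x := 0)).tendsto).add (hshift.continuousWithinAt (x := 0)).tendsto
  convert hlim.congr fun η => ?_ using 2
  · simp; ring
  · simp only [meetFst, id]; ring

lemma tendsto_mul_meetSnd (φ : ℝ) : Tendsto (fun η => η * S.meetSnd φ η) (𝓝[>] 0)
    (𝓝 (S.scale (φ + Real.pi) * (S.σ φ + S.σ (φ + Real.pi)))) := by
  have hcont : Continuous fun η =>
      S.scale (φ + Real.pi + η) * (S.σ φ + S.σ (φ + Real.pi + η) * Real.cos η) := by fun_prop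
  have hshift : Continuous fun η => η * S.shift (φ + Real.pi + η) := by fun_prop
  have hlim := ((tendsto_div_sin_of_hasDerivAt (hasDerivAt_id 0) rfl).mul
    (hcont.continuousWithinAt (x := 0)).tendsto).add (hshift.continuousWithinAt (x := 0)).tendsto
  convert hlim.congr fun η => ?_ using 2
  · simp
  · simp only [meetSnd, id]; ring

lemma tendsto_mul_slope_sub {c b : ℝ → ℝ} {v : ℝ}
    (hc : Tendsto (fun η => η * c η) (𝓝[>] 0) (𝓝 v)) (hb : Continuous b) :
    Tendsto (fun η => η * (S.slope 0 (c η) - b η)) (𝓝[>] 0) (𝓝 (S.rate * v)) := by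
  obtain ⟨M, hM⟩ := S.exists_abs_ripple_le
  have hripple : Tendsto (fun η => η * S.ripple (c η)) (𝓝[>] 0) (𝓝 0) :=
    (tendsto_id.mono_left nhdsWithin_le_nhds).zero_mul_isBoundedUnder_le
      (isBoundedUnder_of ⟨M, fun η => hM (c η)⟩)
  have hb' : Continuous fun η => η * b η := by fun_prop
  have hlim := (hripple.add (hc.const_mul S.rate)).sub (hb'.continuousWithinAt (x := 0)).tendsto
  convert hlim.congr fun η => ?_ using 2
  · simp
  · simp only [ripple]; ring

lemma scale_add_pi (φ : ℝ) : S.scale (φ + Real.pi) = S.scale φ := by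
  have hfst := (S.tendsto_mul_slope_sub (S.tendsto_mul_meetFst φ)
    (continuous_const (y := S.drift φ))).const_mul (S.scale φ)
  have hfactor : Continuous fun η => S.scale (φ + Real.pi + η) *
      (Real.cos η - S.κ (φ + Real.pi + η) * Real.sin η) := by fun_prop
  have hrest : Continuous fun η => η * (S.h (φ + Real.pi + η) * Real.sin η) := by fun_prop
  have hsnd := (((hfactor.continuousWithinAt (x := 0)).tendsto.mul
    (S.tendsto_mul_slope_sub (S.tendsto_mul_meetSnd φ)
      (b := fun η => S.drift (φ + Real.pi + η)) (by fun_prop))).neg).sub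
        (hrest.continuousWithinAt (x := 0)).tendsto
  have hlim := tendsto_nhds_unique (hfst.congr' ?_) hsnd
  · have hpos : 0 < S.rate * (S.σ φ + S.σ (φ + Real.pi)) :=
      mul_pos S.rate_pos (add_pos (S.σ_pos _) (S.σ_pos _))
    simp only [add_zero, Real.cos_zero, Real.sin_zero, mul_zero, sub_zero, mul_one, mul_neg,
      neg_inj] at hlim
    have hsq : S.scale (φ + Real.pi) ^ 2 = S.scale φ ^ 2 :=
      mul_left_cancel₀ hpos.ne' (by linear_combination -hlim)
    exact (pow_left_inj₀ (S.scale_pos _).le (S.scale_pos _).le two_ne_zero).1 hsq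
  · filter_upwards [eventually_sin_ne_zero] with η hη
    linear_combination η * S.scale_mul_slope_meetFst φ hη

lemma κ_add_pi (φ : ℝ) : S.κ (φ + Real.pi) = S.κ φ := by
  have hderiv := (S.hasDerivAt_scale (φ + Real.pi)).comp_add_const φ Real.pi
  rw [funext S.scale_add_pi] at hderiv
  have := hderiv.unique (S.hasDerivAt_scale φ)
  rw [S.scale_add_pi] at this
  exact mul_left_cancel₀ (S.scale_pos φ).ne' this

/-- The limit of the sum of the two transported coordinates of the meeting point of the nearly
parallel support lines at `φ` and `φ + π + η`. -/
def antipodalSum (φ : ℝ) : ℝ := S.shift φ + S.shift (φ + Real.pi) +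
  S.scale φ * S.κ φ * (S.σ φ + S.σ (φ + Real.pi))

lemma hasDerivAt_scale_antipodal (φ : ℝ) :
    HasDerivAt (fun η => S.scale (φ + Real.pi + η)) (S.scale φ * S.κ φ) 0 := by
  have := (S.hasDerivAt_scale (φ + Real.pi + 0)).comp_const_add (φ + Real.pi) 0
  rwa [add_zero, S.scale_add_pi, S.κ_add_pi] at this

lemma hasDerivAt_scale_antipodal_mul_cos (φ : ℝ) :
    HasDerivAt (fun η => S.scale (φ + Real.pi + η) * Real.cos η) (S.scale φ * S.κ φ) 0 :=
  ((S.hasDerivAt_scale_antipodal φ).mul (Real.hasDerivAt_cos 0)).congr_deriv (by simp)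

lemma tendsto_meetFst_add_meetSnd (φ : ℝ) :
    Tendsto (fun η => S.meetFst φ η + S.meetSnd φ η) (𝓝[>] 0) (𝓝 (S.antipodalSum φ)) := by
  have hcos : HasDerivAt (fun η => S.scale φ * Real.cos η) 0 0 := by
    simpa using (Real.hasDerivAt_cos 0).const_mul (S.scale φ)
  have hfst := tendsto_div_sin_of_hasDerivAt ((S.hasDerivAt_scale_antipodal φ).sub hcos)
    (by simp [S.scale_add_pi])
  have hsnd := tendsto_div_sin_of_hasDerivAt
    ((S.hasDerivAt_scale_antipodal_mul_cos φ).sub_const (S.scale φ)) (by simp [S.scale_add_pi])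
  have hσ : Continuous fun η => S.σ (φ + Real.pi + η) := by fun_prop
  have hshift : Continuous fun η => S.shift φ + S.shift (φ + Real.pi + η) := by fun_prop
  have hlim := ((hfst.const_mul (S.σ φ)).add
    ((hσ.continuousWithinAt (x := 0)).tendsto.mul hsnd)).add
      (hshift.continuousWithinAt (x := 0)).tendsto
  convert hlim.congr fun η => ?_ using 2
  · simp only [antipodalSum, add_zero]; ring
  · simp only [meetFst, meetSnd, Pi.sub_apply]; ring

-- The crossing relation makes the leading terms of the two slopes cancel; what remains of the
-- factor `scale * (cos η - κ sin η)` is `O(η²)`, which beats the growth `1 / η` of the slopes.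
lemma tendsto_slope_meetFst_add_slope_meetSnd (φ : ℝ) :
    Tendsto (fun η => (S.slope 0 (S.meetFst φ η) - S.drift φ) +
      (S.slope 0 (S.meetSnd φ η) - S.drift (φ + Real.pi + η))) (𝓝[>] 0) (𝓝 0) := by
  have hfactor : HasDerivAt (fun η => S.scale φ - S.scale (φ + Real.pi + η) * Real.cos η)
      (-(S.scale φ * S.κ φ)) 0 := (S.hasDerivAt_scale_antipodal_mul_cos φ).const_sub _
  have hslope := (tendsto_div_of_hasDerivAt hfactor (hasDerivAt_id 0) (by simp [S.scale_add_pi])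
    rfl one_ne_zero).mono_left (nhdsGT_le_nhdsNE 0)
  have hsin := (tendsto_div_of_hasDerivAt (Real.hasDerivAt_sin 0) (hasDerivAt_id 0)
    Real.sin_zero rfl one_ne_zero).mono_left (nhdsGT_le_nhdsNE 0)
  have hκ : Continuous fun η => S.scale (φ + Real.pi + η) * S.κ (φ + Real.pi + η) := by fun_prop
  have hrest : Continuous fun η => S.h (φ + Real.pi + η) * Real.sin η := by fun_prop
  have hlim := (((S.tendsto_mul_slope_sub (S.tendsto_mul_meetSnd φ)
    (b := fun η => S.drift (φ + Real.pi + η)) (by fun_prop)).mul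
      (hslope.add ((hκ.continuousWithinAt (x := 0)).tendsto.mul hsin))).sub
        (hrest.continuousWithinAt (x := 0)).tendsto).mul_const (S.scale φ)⁻¹
  have hzero : (S.rate * (S.scale (φ + Real.pi) * (S.σ φ + S.σ (φ + Real.pi))) *
      (-(S.scale φ * S.κ φ) / 1 + S.scale (φ + Real.pi + 0) * S.κ (φ + Real.pi + 0) *
        (Real.cos 0 / 1)) - S.h (φ + Real.pi + 0) * Real.sin 0) * (S.scale φ)⁻¹ = 0 := by
    simp [S.scale_add_pi, S.κ_add_pi]
  rw [hzero] at hlim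
  refine hlim.congr' ?_
  filter_upwards [eventually_sin_ne_zero, self_mem_nhdsWithin] with η hη (hη₀ : 0 < η)
  have hη₁ := hη₀.ne'
  have hne := (S.scale_pos φ).ne'
  simp only [id]
  field_simp
  linear_combination -S.scale_mul_slope_meetFst φ hη

lemma tendsto_ripple_meetFst_add_ripple_meetSnd (φ : ℝ) :
    Tendsto (fun η => S.ripple (S.meetFst φ η) + S.ripple (S.meetSnd φ η)) (𝓝[>] 0)
      (𝓝 (S.drift φ + S.drift (φ + Real.pi) - S.rate * S.antipodalSum φ)) := by
  have hdrift : Continuous fun η => S.drift φ + S.drift (φ + Real.pi + η) := by fun_prop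
  have hlim := ((S.tendsto_slope_meetFst_add_slope_meetSnd φ).add
    (hdrift.continuousWithinAt (x := 0)).tendsto).sub
      ((S.tendsto_meetFst_add_meetSnd φ).const_mul S.rate)
  rw [zero_add, add_zero] at hlim
  refine hlim.congr fun η => ?_
  simp only [ripple]
  ring

lemma frequently_meetSnd_eq (φ t : ℝ) :
    ∃ᶠ η in 𝓝[>] (0 : ℝ), ∃ n : ℕ, S.meetSnd φ η = t + n * S.shift (2 * Real.pi) := by
  have hpos : 0 < S.scale (φ + Real.pi) * (S.σ φ + S.σ (φ + Real.pi)) :=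
    mul_pos (S.scale_pos _) (add_pos (S.σ_pos _) (S.σ_pos _))
  refine frequently_eq_add_nat_mul_of_tendsto_atTop Real.pi_pos S.shift_two_pi_pos ?_ ?_ t
  · unfold meetSnd
    refine ContinuousOn.add (ContinuousOn.mul (by fun_prop) (ContinuousOn.div (by fun_prop)
      (by fun_prop) fun η hη => ?_)) (by fun_prop)
    exact (Real.sin_pos_of_pos_of_lt_pi hη.1 hη.2).ne'
  · refine ((S.tendsto_mul_meetSnd φ).pos_mul_atTop hpos tendsto_inv_nhdsGT_zero).congr' ?_
    filter_upwards [self_mem_nhdsWithin] with η (hη : 0 < η)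
    field_simp

lemma ripple_antipodalSum_sub_add (φ t : ℝ) :
    S.ripple (S.antipodalSum φ - t) + S.ripple t =
      S.drift φ + S.drift (φ + Real.pi) - S.rate * S.antipodalSum φ := by
  have hlim : Tendsto (fun η => S.ripple (S.meetFst φ η + S.meetSnd φ η - t) + S.ripple t)
      (𝓝[>] 0) (𝓝 (S.ripple (S.antipodalSum φ - t) + S.ripple t)) :=
    ((S.continuous_ripple.tendsto _).comp
      ((S.tendsto_meetFst_add_meetSnd φ).sub_const t)).add_const _
  refine tendsto_nhds_unique_of_frequently_eq hlim
    (S.tendsto_ripple_meetFst_add_ripple_meetSnd φ) ((S.frequently_meetSnd_eq φ t).mono ?_)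
  rintro η ⟨n, hn⟩
  rw [hn, S.periodic_ripple.nat_mul n t, ← S.periodic_ripple.nat_mul n (S.meetFst φ η)]
  congr 2
  ring

lemma exists_antipodalSum_eq (a : ℝ) :
    ∃ φ, ∃ n : ℤ, S.antipodalSum φ = a + n * S.shift (2 * Real.pi) := by
  have hcont : Continuous S.antipodalSum := by
    unfold antipodalSum
    fun_prop
  have hturn : S.antipodalSum Real.pi = S.antipodalSum 0 + S.shift (2 * Real.pi) := by
    have hκ := S.κ_add_pi 0
    have hscale := S.scale_add_pi 0
    have hσ := S.periodic_σ 0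
    rw [zero_add] at hκ hscale hσ
    have hshift : S.shift 0 = 0 := intervalIntegral.integral_same
    simp only [antipodalSum, zero_add, hκ, hscale, hshift, ← two_mul, hσ]
    ring
  obtain ⟨n, hn, -⟩ := existsUnique_add_zsmul_mem_Ico S.shift_two_pi_pos a (S.antipodalSum 0)
  rw [zsmul_eq_mul] at hn
  obtain ⟨φ, -, hφ⟩ := intermediate_value_Icc Real.pi_pos.le hcont.continuousOn
    (show a + n * S.shift (2 * Real.pi) ∈ Icc (S.antipodalSum 0) (S.antipodalSum Real.pi) from
      ⟨hn.1, hturn ▸ hn.2.le⟩)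
  exact ⟨φ, n, hφ⟩

-- Since `antipodalSum` covers a full period, `c ↦ ripple c - ripple 0` is additive; being bounded
-- it vanishes.
lemma ripple_eq_ripple_zero (c : ℝ) : S.ripple c = S.ripple 0 := by
  have reflect : ∀ a t, S.ripple (a - t) + S.ripple t = S.ripple a + S.ripple 0 := fun a t => by
    obtain ⟨φ, n, hφ⟩ := S.exists_antipodalSum_eq a
    have hper : ∀ t, S.ripple (S.antipodalSum φ - t) = S.ripple (a - t) := fun t => by
      rw [hφ, add_sub_right_comm, S.periodic_ripple.int_mul n]
    have hconst := (S.ripple_antipodalSum_sub_add φ t).trans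
      (S.ripple_antipodalSum_sub_add φ 0).symm
    rwa [hper, hper, sub_zero] at hconst
  obtain ⟨M, hM⟩ := S.exists_abs_ripple_le
  let f : ℝ →+ ℝ := AddMonoidHom.mk' (fun c => S.ripple c - S.ripple 0) fun a b => by
    have := reflect (a + b) b
    rw [add_sub_cancel_right] at this
    linarith
  have hf : f = 0 := addMonoidHom_eq_zero_of_bounded f fun c =>
    (norm_sub_le (S.ripple c) (S.ripple 0)).trans (add_le_add (hM c) (hM 0))
  exact sub_eq_zero.1 (DFunLike.congr_fun hf c)

lemma slope_zero_eq (s : ℝ) : S.slope 0 s = S.slope 0 0 + S.rate * s := by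
  have := S.ripple_eq_ripple_zero s
  rw [ripple, ripple, mul_zero, sub_zero] at this
  linarith

theorem G_line_zero_eq (s : ℝ) :
    S.G (S.line 0 s) = S.G (S.line 0 0) + S.slope 0 0 * s + S.rate / 2 * s ^ 2 := by
  have hderiv : ∀ s, HasDerivAt
      (fun s => S.G (S.line 0 s) - (S.slope 0 0 * s + S.rate / 2 * s ^ 2)) 0 s := fun s => by
    refine ((S.hasDerivAt_G_line 0 s).sub (((hasDerivAt_id s).const_mul (S.slope 0 0)).add
      (((hasDerivAt_id s).pow 2).const_mul (S.rate / 2)))).congr_deriv ?_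
    rw [S.slope_zero_eq s, id]
    ring
  have := is_const_of_deriv_eq_zero (fun s => (hderiv s).differentiableAt)
    (fun s => (hderiv s).deriv) s 0
  simp only [mul_zero, ne_eq, OfNat.ofNat_ne_zero, not_false_eq_true, zero_pow, add_zero,
    sub_zero] at this
  linarith

end SupportLineSystem

end SupportLineSystem

section SupportingFunctional

variable {E : Type*} [NormedAddCommGroup E] [NormedSpace ℝ E] {S : Set E} {l : StrongDual ℝ E}

lemma mem_frontier_of_forall_le (hl : l ≠ 0) {y : E} (hy : y ∈ S) (hmax : ∀ z ∈ S, l z ≤ l y) :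
    y ∈ frontier S := by
  refine ⟨subset_closure hy, fun hint => hl ?_⟩
  have hloc : IsLocalMax l y := Filter.mem_of_superset (mem_interior_iff_mem_nhds.1 hint) hmax
  simpa only [l.fderiv] using hloc.fderiv_eq_zero

lemma eq_zero_of_forall_eq {c : ℝ} (hS : (interior S).Nonempty) (hconst : ∀ z ∈ S, l z = c) :
    l = 0 := by
  obtain ⟨y, hy⟩ := hS
  by_contra hl
  have hyS := interior_subset hy
  exact (mem_frontier_of_forall_le hl hyS fun z hz => (hconst z hz).trans_le (hconst y hyS).ge).2 hy

lemma eq_of_forall_le_of_strictConvex (hS : StrictConvex ℝ S) (hl : l ≠ 0) {y₁ y₂ : E}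
    (hy₁ : y₁ ∈ S) (hy₂ : y₂ ∈ S) (heq : l y₁ = l y₂) (hmax : ∀ z ∈ S, l z ≤ l y₂) : y₁ = y₂ := by
  refine hS.eq hy₁ hy₂ one_half_pos one_half_pos (add_halves 1) fun hint => ?_
  have hmid : l ((1 / 2 : ℝ) • y₁ + (1 / 2 : ℝ) • y₂) = l y₂ := by
    simp only [map_add, map_smul, smul_eq_mul, heq]
    ring
  exact (mem_frontier_of_forall_le hl (interior_subset hint) (hmid ▸ hmax)).2 hint

end SupportingFunctional

section Graze

variable {L : Set E3} {x y : E3}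

lemma subset_coneGen (L : Set E3) (x : E3) : L ⊆ coneGen L x := fun y hy =>
  ⟨y, hy, 1, zero_le_one, by simp⟩

lemma convex_coneGen (hL : Convex ℝ L) (x : E3) : Convex ℝ (coneGen L x) := by
  rintro _ ⟨y₁, hy₁, l₁, hl₁, rfl⟩ _ ⟨y₂, hy₂, l₂, hl₂, rfl⟩ a b ha hb hab
  obtain ⟨y, hy, hcomb⟩ := hL.exists_mem_add_smul_eq hy₁ hy₂ (mul_nonneg ha hl₁) (mul_nonneg hb hl₂)
  refine ⟨y, hy, a * l₁ + b * l₂, by positivity, ?_⟩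
  linear_combination (norm := module) hab • x - hcomb

lemma mem_graze_of_forall_le {l : StrongDual ℝ E3} (hl : l ≠ 0) (hmax : ∀ z ∈ L, l z ≤ l x)
    (hy : y ∈ L) (hyx : l y = l x) : y ∈ graze L x := by
  refine ⟨mem_frontier_of_forall_le hl (subset_coneGen L x hy) ?_,
    mem_frontier_of_forall_le hl hy (hyx ▸ hmax)⟩
  rintro _ ⟨z, hz, r, hr, rfl⟩
  simp only [map_add, map_smul, map_sub, smul_eq_mul]
  nlinarith [hmax z hz]

lemma exists_support_of_mem_graze (hL : Convex ℝ L) (hint : (interior L).Nonempty) (hyL : y ∈ L)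
    (hy : y ∈ graze L x) :
    ∃ l : StrongDual ℝ E3, l x = l y ∧ (∀ z ∈ L, l z ≤ l y) ∧ ∀ z ∈ interior L, l z < l y := by
  obtain ⟨l, hlt⟩ := geometric_hahn_banach_open_point (convex_coneGen hL x).interior isOpen_interior
    hy.1.2
  have hLlt : ∀ z ∈ interior L, l z < l y := fun z hz =>
    hlt z (interior_mono (subset_coneGen L x) hz)
  have hle : ∀ z ∈ coneGen L x, l z ≤ l y := fun z hz => by
    refine closure_minimal (fun w hw => (hlt w hw).le)
      (isClosed_le l.continuous continuous_const) ?_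
    rw [(convex_coneGen hL x).closure_interior_eq_closure_of_nonempty_interior
      (hint.mono (interior_mono (subset_coneGen L x)))]
    exact subset_closure hz
  have hx : l x ≤ l y := hle x ⟨y, hyL, 0, le_rfl, by simp⟩
  have hfar := hle (x + (2 : ℝ) • (y - x)) ⟨y, hyL, 2, zero_le_two, rfl⟩
  simp only [map_add, map_smul, map_sub, smul_eq_mul] at hfar
  exact ⟨l, by linarith, fun z hz => hle z (subset_coneGen L x hz), hLlt⟩

lemma mem_graze_iff (hLcl : IsClosed L) (hL : Convex ℝ L) (h₀ : (0 : E3) ∈ interior L) :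
    y ∈ graze L x ↔
      y ∈ L ∧ ∃ t : StrongDual ℝ E3, t y = 1 ∧ t x = 1 ∧ ∀ z ∈ L, t z ≤ 1 := by
  constructor
  · intro hy
    have hyL := hLcl.frontier_subset hy.2
    obtain ⟨l, hx, hle, hlt⟩ := exists_support_of_mem_graze hL ⟨0, h₀⟩ hyL hy
    have hpos : 0 < l y := by simpa using hlt 0 h₀
    refine ⟨hyL, (l y)⁻¹ • l, inv_mul_cancel₀ hpos.ne', ?_, fun z hz => ?_⟩
    · simp [hx, hpos.ne']
    · simpa [inv_mul_le_iff₀ hpos] using hle z hz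
  · rintro ⟨hyL, t, hty, htx, hle⟩
    refine mem_graze_of_forall_le (l := t) ?_ (htx ▸ hle) hyL (hty.trans htx.symm)
    rintro rfl
    exact zero_ne_one htx

lemma neg_mem_graze_neg (hLcl : IsClosed L) (hL : Convex ℝ L) (h₀ : (0 : E3) ∈ interior L)
    (hsymm : L = -L) (hy : y ∈ graze L x) : -y ∈ graze L (-x) := by
  have hneg : ∀ z ∈ L, -z ∈ L := fun z hz => by rwa [hsymm, Set.neg_mem_neg]
  obtain ⟨hyL, t, hty, htx, hle⟩ := (mem_graze_iff hLcl hL h₀).1 hy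
  exact (mem_graze_iff hLcl hL h₀).2 ⟨hneg y hyL, -t, by simpa, by simpa, fun z hz => by
    simpa using hle (-z) (hneg z hz)⟩

end Graze

section Compactness

open Filter Topology

lemma continuous_of_isClosed_relation {X Y : Type*} [TopologicalSpace X] [TopologicalSpace Y]
    {s : Set Y} (hs : IsCompact s) {f : X → Y} (hfs : ∀ x, f x ∈ s) {R : Set (X × Y)}
    (hR : IsClosed R) (hfR : ∀ x, (x, f x) ∈ R) (huniq : ∀ x, ∀ y ∈ s, (x, y) ∈ R → y = f x) :
    Continuous f := by
  refine continuous_iff_continuousAt.2 fun x =>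
    hs.tendsto_nhds_of_unique_mapClusterPt (.of_forall hfs) fun y hy hcluster =>
      huniq x y hy (hR.closure_subset (mem_closure_iff_nhds.2 fun N hN => ?_))
  obtain ⟨U, hU, V, hV, hUV⟩ := mem_nhds_prod_iff.1 hN
  obtain ⟨z, hzV, hzU⟩ := ((hcluster.frequently hV).and_eventually hU).exists
  exact ⟨(z, f z), hUV ⟨hzU, hzV⟩, hfR z⟩

lemma exists_forall_mul_le_mul_of_isCompact {X : Type*} [TopologicalSpace X] {s : Set X}
    (hs : IsCompact s) {n d : X → ℝ} (hn : Continuous n) (hd : Continuous d)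
    (hd₀ : ∀ z ∈ s, 0 ≤ d z) (hneg : ∀ z ∈ s, d z = 0 → n z < 0) (hpos : ∃ z ∈ s, 0 < d z) :
    ∃ y ∈ s, 0 < d y ∧ ∀ z ∈ s, n z * d y ≤ n y * d z := by
  obtain ⟨z₀, hz₀, hdz₀⟩ := hpos
  let s' := s ∩ {z | n z₀ * d z ≤ n z * d z₀}
  have hs' : IsCompact s' := hs.inter_right (isClosed_le (by fun_prop) (by fun_prop))
  have hd' : ∀ z ∈ s', 0 < d z := fun z ⟨hz, hle⟩ =>
    (hd₀ z hz).lt_of_ne' fun h => by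
      have : n z₀ * d z ≤ n z * d z₀ := hle
      rw [h, mul_zero] at this
      exact this.not_gt (mul_neg_of_neg_of_pos (hneg z hz h) hdz₀)
  obtain ⟨y, hy, hmax⟩ := hs'.exists_isMaxOn ⟨z₀, hz₀, le_refl (n z₀ * d z₀)⟩
    (f := fun z => n z / d z) (hn.continuousOn.div hd.continuousOn fun z hz => (hd' z hz).ne')
  refine ⟨y, hy.1, hd' y hy, fun z hz => ?_⟩
  by_cases hzs' : z ∈ s'
  · exact (div_le_div_iff₀ (hd' z hzs') (hd' y hy)).1 (hmax hzs')
  · have hz_lt : n z * d z₀ < n z₀ * d z := not_le.1 fun h => hzs' ⟨hz, h⟩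
    have hy_ge : n z₀ * d y ≤ n y * d z₀ := hy.2
    refine le_of_mul_le_mul_right ?_ hdz₀
    nlinarith [mul_le_mul_of_nonneg_right hz_lt.le (hd' y hy).le,
      mul_le_mul_of_nonneg_right hy_ge (hd₀ z hz)]

end Compactness

lemma eq_zero_of_forall_mul_le {w c : ℝ} (h : ∀ s : ℝ, s * w ≤ c) : w = 0 := by
  by_contra hw
  have := h ((c + 1) / w)
  rw [div_mul_cancel₀ _ hw] at this
  linarith

section TangentChart

variable {E : Type*} [NormedAddCommGroup E] [NormedSpace ℝ E] {L : Set E} {p : E}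
  {t : StrongDual ℝ E} {ℓ : StrongDual ℝ E}

/-- The projective map `z ↦ (1 - t z)⁻¹ • (z - t z • p)` sends the tangent hyperplane `t = 1` of `L`
at `p` to infinity and `L` to the epigraph of a convex function. This predicate says that `y` maps
to a touching point of the nonvertical supporting hyperplane of that epigraph with slope `ℓ`. -/
def IsTouchingPoint (L : Set E) (p : E) (t ℓ : StrongDual ℝ E) (y : E) : Prop :=
  ∀ z ∈ L, (ℓ z - ℓ p * t z - 1) * (1 - t y) ≤ (ℓ y - ℓ p * t y - 1) * (1 - t z)

lemma exists_isTouchingPoint (hL : IsCompact L) (htp : t p = 1) (hpmax : ∀ z ∈ L, t z ≤ t p)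
    (huniq : ∀ z ∈ L, t z = t p → z = p) (hlt : ∃ z ∈ L, t z < 1) (ℓ : StrongDual ℝ E) :
    ∃ y ∈ L, t y < 1 ∧ IsTouchingPoint L p t ℓ y := by
  rw [htp] at hpmax huniq
  obtain ⟨y, hyL, hy, hmax⟩ := exists_forall_mul_le_mul_of_isCompact hL
    (n := fun z => ℓ z - ℓ p * t z - 1) (d := fun z => 1 - t z) (by fun_prop) (by fun_prop)
    (fun z hz => sub_nonneg.2 (hpmax z hz))
    (fun z hz h => by simp [huniq z hz (sub_eq_zero.1 h).symm, htp])
    (hlt.imp fun _ => And.imp_right sub_pos.2)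
  exact ⟨y, hyL, sub_pos.1 hy, hmax⟩

lemma IsTouchingPoint.eq (hL : StrictConvex ℝ L) (htp : t p = 1) {y₁ y₂ : E}
    (hy₁ : IsTouchingPoint L p t ℓ y₁) (hy₂ : IsTouchingPoint L p t ℓ y₂) (hy₁L : y₁ ∈ L)
    (hy₂L : y₂ ∈ L) (hlt : t y₂ < 1) : y₁ = y₂ := by
  let c := (ℓ y₂ - ℓ p * t y₂ - 1) / (1 - t y₂)
  have hc : c * (1 - t y₂) = ℓ y₂ - ℓ p * t y₂ - 1 := div_mul_cancel₀ _ (sub_pos.2 hlt).ne'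
  have hle : ∀ z ∈ L, ℓ z - ℓ p * t z - 1 ≤ c * (1 - t z) := fun z hz => by
    refine le_of_mul_le_mul_right ((hy₂ z hz).trans_eq ?_) (sub_pos.2 hlt)
    rw [mul_right_comm, hc]
  have heq : ℓ y₁ - ℓ p * t y₁ - 1 = c * (1 - t y₁) := by
    refine (hle y₁ hy₁L).antisymm (le_of_mul_le_mul_right ?_ (sub_pos.2 hlt))
    rw [mul_right_comm, hc]
    exact hy₁ y₂ hy₂L
  let l := ℓ + (c - ℓ p) • t
  have hl : ∀ z, l z = ℓ z - ℓ p * t z + c * t z := fun z => by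
    simp only [l, add_apply, smul_apply, smul_eq_mul]
    ring
  have hly₂ : l y₂ = 1 + c := by linarith [hl y₂]
  refine eq_of_forall_le_of_strictConvex (l := l) hL (fun h => ?_) hy₁L hy₂L
    (by linarith [hl y₁]) fun z hz => by linarith [hle z hz, hl z]
  have hlp : l p = c := by linarith [hl p, htp ▸ hl p]
  rw [h, zero_apply] at hly₂ hlp
  linarith

/-- A continuous choice of touching points: the inverse of the Gauss map of `L` away from `p`, read
in the projective chart of `IsTouchingPoint`. -/
structure TangentChart (L : Set E) (p : E) (t : StrongDual ℝ E) where
  touch : StrongDual ℝ E → E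
  continuous_touch : Continuous touch
  touch_mem : ∀ ℓ, touch ℓ ∈ L
  apply_touch_lt_one : ∀ ℓ, t (touch ℓ) < 1
  isTouchingPoint_touch : ∀ ℓ, IsTouchingPoint L p t ℓ (touch ℓ)

namespace TangentChart

lemma nonempty_of_strictConvex (hL : IsCompact L) (hLs : StrictConvex ℝ L) (hpL : p ∈ L)
    (htp : t p = 1) (hpmax : ∀ z ∈ L, t z ≤ t p) (hlt : ∃ z ∈ L, t z < 1) :
    Nonempty (TangentChart L p t) := by
  have ht : t ≠ 0 := by
    rintro rfl
    exact zero_ne_one htp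
  have huniq : ∀ z ∈ L, t z = t p → z = p := fun z hz h =>
    eq_of_forall_le_of_strictConvex hLs ht hz hpL h hpmax
  choose touch hmem hlt hmax using exists_isTouchingPoint hL htp hpmax huniq hlt
  refine ⟨⟨touch, ?_, hmem, hlt, hmax⟩⟩
  refine continuous_of_isClosed_relation hL hmem
    (R := {q | IsTouchingPoint L p t q.1 q.2}) ?_ hmax fun ℓ y hy hyℓ =>
      hyℓ.eq hLs htp (hmax ℓ) hy (hmem ℓ) (hlt ℓ)
  simp only [IsTouchingPoint, ofPred_forall]
  exact isClosed_biInter fun z _ => isClosed_le (by fun_prop) (by fun_prop)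

variable (C : TangentChart L p t)

/-- The height of the supporting hyperplane with slope `ℓ` in the projective chart, that is, the
conjugate of the convex function whose epigraph is the image of `L`. -/
def height (ℓ : StrongDual ℝ E) : ℝ :=
  (ℓ (C.touch ℓ) - ℓ p * t (C.touch ℓ) - 1) / (1 - t (C.touch ℓ))

/-- The image of the touching point in the projective chart, which is the gradient of `height`. -/
def grad (ℓ : StrongDual ℝ E) : E :=
  (1 - t (C.touch ℓ))⁻¹ • (C.touch ℓ - t (C.touch ℓ) • p)

lemma one_sub_apply_touch_pos (ℓ : StrongDual ℝ E) : 0 < 1 - t (C.touch ℓ) :=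
  sub_pos.2 (C.apply_touch_lt_one ℓ)

lemma height_mul (ℓ : StrongDual ℝ E) : C.height ℓ * (1 - t (C.touch ℓ)) =
    ℓ (C.touch ℓ) - ℓ p * t (C.touch ℓ) - 1 :=
  div_mul_cancel₀ _ (C.one_sub_apply_touch_pos ℓ).ne'

lemma le_height_mul (ℓ : StrongDual ℝ E) {z : E} (hz : z ∈ L) :
    ℓ z - ℓ p * t z - 1 ≤ C.height ℓ * (1 - t z) := by
  rw [height, div_mul_eq_mul_div, le_div_iff₀ (C.one_sub_apply_touch_pos ℓ)]
  exact C.isTouchingPoint_touch ℓ z hz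

lemma apply_grad_mul (ℓ m : StrongDual ℝ E) : m (C.grad ℓ) * (1 - t (C.touch ℓ)) =
    m (C.touch ℓ) - m p * t (C.touch ℓ) := by
  have := (C.one_sub_apply_touch_pos ℓ).ne'
  simp only [grad, map_smul, map_sub, smul_eq_mul]
  field_simp

lemma continuous_grad : Continuous C.grad := by
  have := C.continuous_touch
  have := fun ℓ => (C.one_sub_apply_touch_pos ℓ).ne'
  unfold grad
  fun_prop (disch := assumption)

lemma height_add_le (ℓ m : StrongDual ℝ E) : C.height ℓ + (m - ℓ) (C.grad ℓ) ≤ C.height m := by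
  refine le_of_mul_le_mul_right ?_ (C.one_sub_apply_touch_pos ℓ)
  rw [sub_apply]
  linarith [C.height_mul ℓ, C.apply_grad_mul ℓ m, C.apply_grad_mul ℓ ℓ,
    C.le_height_mul m (C.touch_mem ℓ)]

lemma exists_apply_grad_ne (hint : (interior L).Nonempty) {m : StrongDual ℝ E}
    (hm : ∀ c : ℝ, m ≠ c • t) (ℓ : StrongDual ℝ E) :
    ∃ s₁ s₂ : ℝ, m (C.grad (ℓ + s₁ • m)) ≠ m (C.grad (ℓ + s₂ • m)) := by
  by_contra! hconst
  set β := m (C.grad ℓ) with hβ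
  have hgrad : ∀ s : ℝ, m (C.grad (ℓ + s • m)) = β := fun s => by simpa using hconst s 0
  have haffine : ∀ s : ℝ, C.height (ℓ + s • m) = C.height ℓ + s * β := fun s => by
    have hle := C.height_add_le (ℓ + s • m) ℓ
    have hge := C.height_add_le ℓ (ℓ + s • m)
    rw [sub_add_cancel_left, neg_apply, smul_apply, hgrad, smul_eq_mul] at hle
    rw [add_sub_cancel_left, smul_apply, ← hβ, smul_eq_mul] at hge
    linarith
  have hcoeff : ∀ z ∈ L, m z - m p * t z - β * (1 - t z) = 0 := fun z hz => by
    refine eq_zero_of_forall_mul_le (c := C.height ℓ * (1 - t z) - (ℓ z - ℓ p * t z - 1))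
      fun s => ?_
    have hle := C.le_height_mul (ℓ + s • m) hz
    simp only [haffine, add_apply, smul_apply, smul_eq_mul] at hle
    linarith
  have hzero : m - (m p - β) • t = 0 := eq_zero_of_forall_eq hint (c := β) fun z hz => by
    simp only [sub_apply, smul_apply, smul_eq_mul]
    linarith [hcoeff z hz]
  exact hm _ (sub_eq_zero.1 hzero)

end TangentChart

end TangentChart

section Gauge

open Filter Topology

variable {V : Type*} [NormedAddCommGroup V] [NormedSpace ℝ V] {e₁ e₂ : V}

lemma radial_ne_zero (he : LinearIndependent ℝ ![e₁, e₂]) (φ : ℝ) : radial e₁ e₂ φ ≠ 0 :=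
  fun h => by
    obtain ⟨hcos, hsin⟩ := LinearIndependent.pair_iff.1 he _ _ h
    simpa [hcos, hsin] using Real.sin_sq_add_cos_sq φ

lemma norm_tangential_le (e₁ e₂ : V) (φ : ℝ) : ‖tangential e₁ e₂ φ‖ ≤ ‖e₁‖ + ‖e₂‖ := by
  refine (norm_add_le _ _).trans (add_le_add ?_ ?_) <;> rw [norm_smul]
  · exact mul_le_of_le_one_left (norm_nonneg _) (by simpa using Real.abs_sin_le_one φ)
  · exact mul_le_of_le_one_left (norm_nonneg _) (by simpa using Real.abs_cos_le_one φ)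

lemma lipschitzWith_radial (e₁ e₂ : V) : LipschitzWith (‖e₁‖₊ + ‖e₂‖₊) (radial e₁ e₂) :=
  lipschitzWith_of_nnnorm_deriv_le (fun φ => (hasDerivAt_radial e₁ e₂ φ).differentiableAt)
    fun φ => by
      rw [(hasDerivAt_radial e₁ e₂ φ).deriv]
      exact_mod_cast norm_tangential_le e₁ e₂ φ

lemma radial_add_add_radial_sub (e₁ e₂ : V) (φ ε : ℝ) :
    radial e₁ e₂ (φ + ε) + radial e₁ e₂ (φ - ε) = (2 * Real.cos ε) • radial e₁ e₂ φ := by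
  simp only [radial, Real.cos_add, Real.cos_sub, Real.sin_add, Real.sin_sub]
  module

variable {s : Set V}

lemma gauge_pos_of_isBounded (hs₀ : s ∈ 𝓝 0) (hsb : Bornology.IsBounded s) {v : V} (hv : v ≠ 0) :
    0 < gauge s v :=
  (gauge_pos (absorbent_nhds_zero hs₀) (NormedSpace.isVonNBounded_of_isBounded ℝ hsb)).2 hv

lemma inv_gauge_smul_mem_frontier (hs : Convex ℝ s) (hs₀ : s ∈ 𝓝 0) (hsb : Bornology.IsBounded s)
    {v : V} (hv : v ≠ 0) : (gauge s v)⁻¹ • v ∈ frontier s := by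
  have hpos := gauge_pos_of_isBounded hs₀ hsb hv
  rw [← gauge_eq_one_iff_mem_frontier hs hs₀, gauge_smul_of_nonneg (inv_nonneg.2 hpos.le)]
  exact inv_mul_cancel₀ hpos.ne'

lemma isPlanarSupportFunction_gauge (hs : Convex ℝ s) (hs₀ : s ∈ 𝓝 0)
    (hsb : Bornology.IsBounded s) (he : LinearIndependent ℝ ![e₁, e₂]) :
    IsPlanarSupportFunction fun φ => gauge s (radial e₁ e₂ φ) where
  lipschitz := by
    obtain ⟨C, hC⟩ := hs.lipschitz_gauge hs₀
    exact ⟨_, hC.comp (lipschitzWith_radial e₁ e₂)⟩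
  periodic φ := by simp only [radial_add_two_pi]
  pos φ := gauge_pos_of_isBounded hs₀ hsb (radial_ne_zero he φ)
  two_mul_cos_mul_le φ ε := by
    rcases le_total 0 (Real.cos ε) with hcos | hcos
    · have hadd := gauge_add_le hs (absorbent_nhds_zero hs₀) (radial e₁ e₂ (φ + ε))
        (radial e₁ e₂ (φ - ε))
      rwa [radial_add_add_radial_sub, gauge_smul_of_nonneg (by positivity)] at hadd
    · exact (mul_nonpos_of_nonpos_of_nonneg (by linarith) (gauge_nonneg _)).trans
        (add_nonneg (gauge_nonneg _) (gauge_nonneg _))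

lemma exists_isPlanarSupportFunction {p : V} (hs : Convex ℝ s) (hsb : Bornology.IsBounded s)
    (hp : p ∈ interior s) (he : LinearIndependent ℝ ![e₁, e₂]) :
    ∃ σ, IsPlanarSupportFunction σ ∧ (∀ φ, p + (σ φ)⁻¹ • radial e₁ e₂ φ ∈ frontier s) ∧
      (p + e₁ ∈ frontier s → σ 0 = 1) := by
  let τ := IsometryEquiv.addLeft p
  have hτ₀ : τ ⁻¹' s ∈ 𝓝 0 := τ.continuous.continuousAt.preimage_mem_nhds
    (mem_interior_iff_mem_nhds.1 (by simpa [τ] using hp))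
  have hτs : Convex ℝ (τ ⁻¹' s) := hs.translate_preimage_right p
  have hτb : Bornology.IsBounded (τ ⁻¹' s) := τ.isometry.antilipschitz.isBounded_preimage hsb
  have hfrontier : frontier (τ ⁻¹' s) = τ ⁻¹' frontier s :=
    (τ.toHomeomorph.preimage_frontier s).symm
  refine ⟨_, isPlanarSupportFunction_gauge hτs hτ₀ hτb he, fun φ => ?_, fun hx => ?_⟩
  · have := inv_gauge_smul_mem_frontier hτs hτ₀ hτb (radial_ne_zero he φ)
    rwa [hfrontier] at this
  · rw [radial_zero, gauge_eq_one_iff_mem_frontier hτs hτ₀, hfrontier]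
    exact hx

end Gauge

section Coordinates

variable {V : Type*} [AddCommGroup V] [Module ℝ V]

lemma smul_add_smul_eq_radial_tangential (e₁ e₂ : V) (x y φ : ℝ) :
    x • e₁ + y • e₂ =
      radial x y φ • radial e₁ e₂ φ + tangential x y φ • tangential e₁ e₂ φ := by
  simp only [radial, tangential, smul_eq_mul]
  match_scalars
  · linear_combination -x * Real.sin_sq_add_cos_sq φ
  · linear_combination -y * Real.sin_sq_add_cos_sq φ

lemma exists_basis_coord_two_eq (hV : Module.finrank ℝ V = 3) {f : V →ₗ[ℝ] ℝ} {e p : V}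
    (he : f e = 0) (hp : f p = 1) (he₀ : e ≠ 0) :
    ∃ b : Module.Basis (Fin 3) ℝ V, b 0 = e ∧ b 2 = p ∧ b.coord 2 = f := by
  have : FiniteDimensional ℝ V := .of_finrank_pos (by omega)
  have hf : f ≠ 0 := fun h => by simp [h] at hp
  have hker : Module.finrank ℝ (LinearMap.ker f) = 2 := by
    have := Module.Dual.finrank_ker_add_one_of_ne_zero hf
    omega
  obtain ⟨y, hy⟩ := exists_linearIndependent_pair_of_one_lt_finrank
    (hker.symm ▸ one_lt_two) (x := (⟨e, he⟩ : LinearMap.ker f)) fun h => he₀ congr($h)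
  let b₂ := basisOfLinearIndependentOfCardEqFinrank hy (by rw [hker, Fintype.card_fin])
  let b : Module.Basis (Fin 3) ℝ V := b₂.mkFinSnoc p
    (fun c x hx h => by simpa [hp, LinearMap.mem_ker.1 hx] using congrArg f h)
    (fun z => ⟨-f z, by simp [hp]⟩)
  have hb : ⇑b = ![e, y, p] := by
    ext i
    fin_cases i <;> simp [b, b₂, Fin.snoc]
  refine ⟨b, by simp [hb], by simp [hb], b.ext fun i => ?_⟩
  rw [Module.Basis.coord_apply, b.repr_self, hb]
  fin_cases i <;> simp [he, hp]

end Coordinates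

section Conjugate

lemma exists_radial_add_mul_tangential_eq {V : Type*} [AddCommGroup V] [Module ℝ V]
    (b : Module.Basis (Fin 3) ℝ V) {N : V →ₗ[ℝ] ℝ} (hN₀ : N ≠ 0) {φ : ℝ} {x y : ℝ → ℝ}
    (hN : ∀ s, N (x s • b 0 + y s • b 1) = N (b 2))
    (hne : ∃ s₁ s₂, tangential (x s₁) (y s₁) φ ≠ tangential (x s₂) (y s₂) φ) :
    ∃ κ h : ℝ, ∀ s, radial (x s) (y s) φ + κ * tangential (x s) (y s) φ = h := by
  set u := N (radial (b 0) (b 1) φ) with hu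
  set j := N (tangential (b 0) (b 1) φ) with hj
  have hframe : ∀ s, radial (x s) (y s) φ * u + tangential (x s) (y s) φ * j = N (b 2) :=
    fun s => by rw [← hN s, smul_add_smul_eq_radial_tangential _ _ _ _ φ]; simp [hu, hj]
  have hu₀ : u ≠ 0 := fun hu₀ => by
    obtain ⟨s₁, s₂, hs⟩ := hne
    have hdiff : (tangential (x s₁) (y s₁) φ - tangential (x s₂) (y s₂) φ) * j = 0 := by
      linear_combination hframe s₁ - hframe s₂ -
        (radial (x s₁) (y s₁) φ - radial (x s₂) (y s₂) φ) * hu₀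
    have hj₀ : j = 0 := (mul_eq_zero.1 hdiff).resolve_left (sub_ne_zero.2 hs)
    have h₀ := congrArg N (radial_sub (b 0) (b 1) φ φ)
    have h₁ := congrArg N (tangential_sub (b 0) (b 1) φ φ)
    simp only [sub_self, radial_zero, tangential_zero, map_sub, map_add, map_smul, ← hu, ← hj, hu₀,
      hj₀, smul_zero, add_zero] at h₀ h₁
    have h₂ : N (b 2) = 0 := by simpa [hu₀, hj₀] using (hframe 0).symm
    refine hN₀ (b.ext fun i => ?_)
    fin_cases i <;> simpa
  refine ⟨j / u, N (b 2) / u, fun s => ?_⟩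
  rw [← hframe s]
  field_simp

lemma IsPlane.exists_ker_eq_direction {P : AffineSubspace ℝ E3} (hP : IsPlane P) :
    ∃ N : E3 →ₗ[ℝ] ℝ, N ≠ 0 ∧ LinearMap.ker N = P.direction := by
  have hfin : Module.finrank ℝ P.direction = 2 := hP
  have hlt : P.direction < ⊤ := lt_top_iff_ne_top.2 fun h => by
    rw [h, finrank_top, finrank_euclideanSpace_fin] at hfin
    omega
  obtain ⟨N, hN₀, hle⟩ := P.direction.exists_le_ker_of_lt_top hlt
  have hker := Module.Dual.finrank_ker_add_one_of_ne_zero hN₀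
  rw [finrank_euclideanSpace_fin] at hker
  exact ⟨N, hN₀, (Submodule.eq_of_le_of_finrank_eq hle (by omega)).symm⟩

/-- The coordinate functional of a basis, as an element of the dual. -/
def coordDual (b : Module.Basis (Fin 3) ℝ E3) (i : Fin 3) : StrongDual ℝ E3 :=
  LinearMap.toContinuousLinearMap (b.coord i)

lemma coordDual_apply_self (b : Module.Basis (Fin 3) ℝ E3) (i j : Fin 3) :
    coordDual b i (b j) = if i = j then 1 else 0 := by
  simp [coordDual, Finsupp.single_apply, eq_comm]

lemma eq_sum_coordDual_smul (b : Module.Basis (Fin 3) ℝ E3) (v : E3) :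
    v = coordDual b 0 v • b 0 + coordDual b 1 v • b 1 + coordDual b 2 v • b 2 :=
  (b.sum_repr v).symm.trans (Fin.sum_univ_three _)

namespace TangentChart

variable {L : Set E3}

section

variable {p : E3} {t : StrongDual ℝ E3} (C : TangentChart L p t)

lemma touch_mem_graze (htp : t p = 1) {u : E3} (hu : t u = 0) {ℓ : StrongDual ℝ E3}
    (hℓu : ℓ u = 1) : C.touch ℓ ∈ graze L (p + u) := by
  let l := ℓ + (C.height ℓ - ℓ p) • t
  have hl : ∀ z, l z = ℓ z - ℓ p * t z + C.height ℓ * t z := fun z => by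
    simp only [l, add_apply, smul_apply, smul_eq_mul]
    ring
  have hlp : l p = C.height ℓ := by rw [hl, htp]; ring
  have hlu : l (p + u) = 1 + C.height ℓ := by rw [map_add, hlp, hl, hu, hℓu]; ring
  refine mem_graze_of_forall_le (l := l) ?_ (fun z hz => ?_) (C.touch_mem ℓ) ?_
  · intro h
    rw [h, zero_apply] at hlp hlu
    linarith
  · linarith [hl z, C.le_height_mul ℓ hz]
  · linarith [hl (C.touch ℓ), C.height_mul ℓ]

lemma map_grad_eq_of_mem {P : AffineSubspace ℝ E3} (hp : p ∈ P) {ℓ : StrongDual ℝ E3}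
    (hℓ : C.touch ℓ ∈ P) {N : E3 →ₗ[ℝ] ℝ} (hN : P.direction ≤ LinearMap.ker N) :
    N (C.grad ℓ) = N p := by
  have hNeq : N (C.touch ℓ) = N p := by
    simpa [sub_eq_zero] using hN (P.vsub_mem_direction hℓ hp)
  have := (C.one_sub_apply_touch_pos ℓ).ne'
  simp only [grad, map_smul, map_sub, hNeq, smul_eq_mul]
  field_simp

lemma apply_grad_self (htp : t p = 1) (ℓ : StrongDual ℝ E3) : t (C.grad ℓ) = 0 := by
  simp [grad, htp]

end

variable {b : Module.Basis (Fin 3) ℝ E3} (C : TangentChart L (b 2) (coordDual b 2))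

lemma exists_tangential_grad_ne (hint : (interior L).Nonempty) (σ : ℝ → ℝ) (φ : ℝ) :
    ∃ s₁ s₂, tangential (coordDual b 0) (coordDual b 1) φ
        (C.grad (supportLine (coordDual b 0) (coordDual b 1) σ φ s₁)) ≠
      tangential (coordDual b 0) (coordDual b 1) φ
        (C.grad (supportLine (coordDual b 0) (coordDual b 1) σ φ s₂)) := by
  refine C.exists_apply_grad_ne hint (fun c hc => ?_) _
  have hsin : Real.sin φ = 0 := by simpa [tangential, coordDual_apply_self] using congr($hc (b 0))
  have hcos : Real.cos φ = 0 := by simpa [tangential, coordDual_apply_self] using congr($hc (b 1))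
  simpa [hsin, hcos] using Real.sin_sq_add_cos_sq φ

lemma touch_supportLine_mem_graze {σ : ℝ → ℝ} {φ : ℝ} (hσ : σ φ ≠ 0) (s : ℝ) :
    C.touch (supportLine (coordDual b 0) (coordDual b 1) σ φ s) ∈
      graze L (b 2 + (σ φ)⁻¹ • radial (b 0) (b 1) φ) := by
  refine C.touch_mem_graze (by simp [coordDual_apply_self])
    (by simp [radial, coordDual_apply_self]) ?_
  simp only [supportLine, radial, tangential, add_apply, smul_apply, map_add, map_smul,
    coordDual_apply_self, ↓reduceIte, one_ne_zero, zero_ne_one, smul_eq_mul, mul_one, mul_zero,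
    add_zero, zero_add]
  field_simp
  linear_combination (σ φ) * Real.sin_sq_add_cos_sq φ

lemma exists_conjugate_of_isPlane (hL : b 2 ∈ L)
    (hmax : ∀ z ∈ L, coordDual b 2 z ≤ 1) (hint : (interior L).Nonempty)
    {σ : ℝ → ℝ} {φ : ℝ} (hσ : σ φ ≠ 0) {P : AffineSubspace ℝ E3} (hP : IsPlane P)
    (hgraze : graze L (b 2 + (σ φ)⁻¹ • radial (b 0) (b 1) φ) ⊆ P) :
    ∃ κ h : ℝ, ∀ s,
      radial (coordDual b 0) (coordDual b 1) φ
          (C.grad (supportLine (coordDual b 0) (coordDual b 1) σ φ s)) +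
        κ * tangential (coordDual b 0) (coordDual b 1) φ
          (C.grad (supportLine (coordDual b 0) (coordDual b 1) σ φ s)) = h := by
  have hb₂ : coordDual b 2 (b 2) = 1 := by simp [coordDual_apply_self]
  have hx : coordDual b 2 (b 2 + (σ φ)⁻¹ • radial (b 0) (b 1) φ) = 1 := by
    simp [radial, coordDual_apply_self]
  obtain ⟨N, hN₀, hN⟩ := hP.exists_ker_eq_direction
  have hp : b 2 ∈ P := hgraze <| mem_graze_of_forall_le (l := coordDual b 2)
    (fun h => by simp [h] at hb₂) (hx ▸ hmax) hL (hb₂.trans hx.symm)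
  refine exists_radial_add_mul_tangential_eq b hN₀ (φ := φ)
    (x := fun s => coordDual b 0 (C.grad (supportLine (coordDual b 0) (coordDual b 1) σ φ s)))
    (y := fun s => coordDual b 1 (C.grad (supportLine (coordDual b 0) (coordDual b 1) σ φ s)))
    (fun s => ?_) (C.exists_tangential_grad_ne hint σ φ)
  have hgrad := eq_sum_coordDual_smul b
    (C.grad (supportLine (coordDual b 0) (coordDual b 1) σ φ s))
  rw [C.apply_grad_self hb₂, zero_smul, add_zero] at hgrad
  rw [← hgrad, C.map_grad_eq_of_mem hp (hgraze (C.touch_supportLine_mem_graze hσ s)) hN.ge]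

end TangentChart

end Conjugate

section ConeFrame

/-- The planes `a + s * b + s ^ 2 / 2 * t = 0` through `x`, where `a`, `b`, `t` are evaluated
relative to `x`, support `L` and touch it, and so does the plane `t = 0`, the limiting case `s → ∞`,
at `p`. The tangent cone of `L` from `x` is thus the quadratic cone `2 * a * t = b ^ 2`. -/
structure ConeFrame (L : Set E3) (x p : E3) (a b t : StrongDual ℝ E3) : Prop where
  eq_zero : ∀ v, a v = 0 → b v = 0 → t v = 0 → v = 0
  mem : p ∈ L
  a_sub : a (p - x) = -1
  b_sub : b (p - x) = 0
  t_sub : t (p - x) = 0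
  t_nonpos : ∀ z ∈ L, t (z - x) ≤ 0
  nonpos : ∀ s : ℝ, ∀ z ∈ L, a (z - x) + s * b (z - x) + s ^ 2 / 2 * t (z - x) ≤ 0
  exists_touch : ∀ s : ℝ, ∃ y ∈ L, t (y - x) < 0 ∧ b (y - x) = -s * t (y - x) ∧
    a (y - x) = s ^ 2 / 2 * t (y - x)

namespace TangentChart

variable {L : Set E3} {b : Module.Basis (Fin 3) ℝ E3} (C : TangentChart L (b 2) (coordDual b 2))

lemma exists_height_eq_quadratic (hL : b 2 ∈ L) (hmax : ∀ z ∈ L, coordDual b 2 z ≤ 1)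
    (hint : (interior L).Nonempty) {σ : ℝ → ℝ} (hσ : IsPlanarSupportFunction σ) (hσ₀ : σ 0 = 1)
    (hgraze : ∀ φ, ∃ P : AffineSubspace ℝ E3, IsPlane P ∧
      graze L (b 2 + (σ φ)⁻¹ • radial (b 0) (b 1) φ) ⊆ P) :
    ∃ α β k : ℝ, 0 < k ∧ ∀ s : ℝ,
      C.height (coordDual b 0 + s • coordDual b 1) = α + β * s + k / 2 * s ^ 2 ∧
      coordDual b 1 (C.grad (coordDual b 0 + s • coordDual b 1)) = β + k * s := by
  choose P hP hPL using hgraze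
  choose κ h hκh using fun φ =>
    C.exists_conjugate_of_isPlane hL hmax hint (hσ.pos φ).ne' (hP φ) (hPL φ)
  let S : SupportLineSystem (StrongDual ℝ E3) :=
    { G := C.height
      D := fun ℓ => NormedSpace.inclusionInDoubleDual ℝ E3 (C.grad ℓ)
      e₁ := coordDual b 0
      e₂ := coordDual b 1
      σ, κ, h
      continuous_D := (NormedSpace.inclusionInDoubleDual ℝ E3).continuous.comp C.continuous_grad
      subgradient := C.height_add_le
      isPlanarSupportFunction := hσ
      conjugate := hκh
      exists_slope_ne := C.exists_tangential_grad_ne hint σ }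
  have hline : ∀ s, S.line 0 s = coordDual b 0 + s • coordDual b 1 := fun s => by
    simp [S, SupportLineSystem.line, supportLine, hσ₀]
  have hslope : ∀ s, S.slope 0 s = coordDual b 1 (C.grad (coordDual b 0 + s • coordDual b 1)) :=
    fun s => by
      rw [← hline]
      simp [S, SupportLineSystem.slope]
  refine ⟨S.G (S.line 0 0), S.slope 0 0, S.rate, S.rate_pos, fun s => ⟨?_, ?_⟩⟩
  · rw [← S.G_line_zero_eq, hline]
  · rw [← S.slope_zero_eq, hslope]

lemma coneFrame (hL : b 2 ∈ L) (hmax : ∀ z ∈ L, coordDual b 2 z ≤ 1) {α β k : ℝ} (hk : 0 < k)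
    (hheight : ∀ s : ℝ,
      C.height (coordDual b 0 + s • coordDual b 1) = α + β * s + k / 2 * s ^ 2 ∧
      coordDual b 1 (C.grad (coordDual b 0 + s • coordDual b 1)) = β + k * s) :
    ConeFrame L (b 0 + b 2) (b 2) (coordDual b 0 + α • coordDual b 2)
      (coordDual b 1 + β • coordDual b 2) (k • coordDual b 2) := by
  have hcoord : ∀ i j, coordDual b i (b j) = if i = j then 1 else 0 := coordDual_apply_self b
  have hsub₀ : ∀ z, coordDual b 0 (z - (b 0 + b 2)) = coordDual b 0 z - 1 := by simp [hcoord]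
  have hsub₁ : ∀ z, coordDual b 1 (z - (b 0 + b 2)) = coordDual b 1 z := by simp [hcoord]
  have hsub₂ : ∀ z, coordDual b 2 (z - (b 0 + b 2)) = coordDual b 2 z - 1 := by simp [hcoord]
  have hline : ∀ (s : ℝ) z, (coordDual b 0 + s • coordDual b 1) z =
      coordDual b 0 z + s * coordDual b 1 z := fun _ _ => rfl
  have hb₀₂ : coordDual b 0 (b 2) = 0 := by simp [hcoord]
  have hb₁₂ : coordDual b 1 (b 2) = 0 := by simp [hcoord]
  refine ⟨fun v ha hb ht => ?_, hL, by simp [hcoord], by simp [hcoord], by simp [hcoord],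
    fun z hz => ?_, fun s z hz => ?_, fun s => ?_⟩
  · have ht₀ : coordDual b 2 v = 0 := by simpa [hk.ne'] using ht
    rw [eq_sum_coordDual_smul b v]
    simp_all
  all_goals simp only [add_apply, smul_apply, smul_eq_mul, hsub₀, hsub₁, hsub₂]
  · exact mul_nonpos_of_nonneg_of_nonpos hk.le (sub_nonpos.2 (hmax z hz))
  · have hle := C.le_height_mul (coordDual b 0 + s • coordDual b 1) hz
    simp only [(hheight s).1, hline, hb₀₂, hb₁₂, mul_zero, add_zero, zero_mul, sub_zero] at hle
    linarith
  · let y := C.touch (coordDual b 0 + s • coordDual b 1)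
    have ha := C.height_mul (coordDual b 0 + s • coordDual b 1)
    have hb := C.apply_grad_mul (coordDual b 0 + s • coordDual b 1) (coordDual b 1)
    simp only [(hheight s).1, (hheight s).2, hline, hb₀₂, hb₁₂, mul_zero, add_zero, zero_mul,
      sub_zero] at ha hb
    refine ⟨y, C.touch_mem _, mul_neg_of_pos_of_neg hk (sub_neg.2 (C.apply_touch_lt_one _)), ?_, ?_⟩
    · linear_combination -hb
    · linear_combination s * hb - ha

end TangentChart

theorem exists_coneFrame {K L : Set E3} (hK : Convex ℝ K) (hKb : Bornology.IsBounded K)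
    (hL : IsCompact L) (hLs : StrictConvex ℝ L) (h₀ : (0 : E3) ∈ interior L) (hLK : L ⊆ interior K)
    (hplanar : ∀ z ∈ frontier K, ∃ P : AffineSubspace ℝ E3, IsPlane P ∧ graze L z ⊆ P) {x p : E3}
    (hx : x ∈ frontier K) (hp : p ∈ graze L x) :
    ∃ a b t : StrongDual ℝ E3, ConeFrame L x p a b t := by
  obtain ⟨hpL, t, htp, htx, hmax⟩ := (mem_graze_iff hL.isClosed hLs.convex h₀).1 hp
  have hxp : x - p ≠ 0 := fun h => hx.2 (sub_eq_zero.1 h ▸ hLK hpL)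
  obtain ⟨b, hb₀, rfl, hb₂⟩ := exists_basis_coord_two_eq (finrank_euclideanSpace_fin)
    (f := (t : E3 →ₗ[ℝ] ℝ)) (e := x - p) (by simp [htx, htp]) htp hxp
  obtain rfl : coordDual b 2 = t := ContinuousLinearMap.coe_injective hb₂
  obtain ⟨C⟩ := TangentChart.nonempty_of_strictConvex hL hLs hpL htp (htp ▸ hmax)
    ⟨0, interior_subset h₀, by simp⟩
  have hind : LinearIndependent ℝ ![b 0, b 1] := by
    have := b.linearIndependent.comp ![0, 1] (by decide)
    rwa [show ⇑b ∘ ![0, 1] = ![b 0, b 1] by ext i; fin_cases i <;> rfl] at this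
  obtain ⟨σ, hσ, hfrontier, hσ₀⟩ := exists_isPlanarSupportFunction hK hKb (hLK hpL) hind
  obtain ⟨α, β, k, hk, hheight⟩ := C.exists_height_eq_quadratic hpL hmax ⟨0, h₀⟩ hσ
    (hσ₀ (by simpa [hb₀] using hx)) fun φ => hplanar _ (hfrontier φ)
  exact ⟨_, _, _, by simpa [hb₀] using C.coneFrame hpL hmax hk hheight⟩

end ConeFrame

section ConeForm

variable {E : Type*} [NormedAddCommGroup E] [NormedSpace ℝ E]

/-- The symmetric bilinear form with quadratic form `2 * a * t - b ^ 2`. -/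
def coneForm (a b t : StrongDual ℝ E) : LinearMap.BilinForm ℝ E :=
  .linMulLin a t + .linMulLin t a - .linMulLin b b

lemma coneForm_apply (a b t : StrongDual ℝ E) (v w : E) :
    coneForm a b t v w = a v * t w + t v * a w - b v * b w := rfl

lemma isSymm_coneForm (a b t : StrongDual ℝ E) : (coneForm a b t).IsSymm :=
  ⟨fun v w => by
    simp only [coneForm_apply]
    ring⟩

end ConeForm

namespace ConeFrame

variable {L : Set E3} {x p : E3} {a b t : StrongDual ℝ E3}

lemma eq_of_apply_eq (F : ConeFrame L x p a b t) {v w : E3} (ha : a v = a w) (hb : b v = b w)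
    (ht : t v = t w) : v = w :=
  sub_eq_zero.1 <| F.eq_zero _ (by simp [ha]) (by simp [hb]) (by simp [ht])

lemma exists_mem_graze (F : ConeFrame L x p a b t) (s : ℝ) :
    ∃ y ∈ L, t (y - x) < 0 ∧ b (y - x) = -s * t (y - x) ∧ a (y - x) = s ^ 2 / 2 * t (y - x) ∧
      ∀ w, a (w - x) + s * b (w - x) + s ^ 2 / 2 * t (w - x) = 0 → y ∈ graze L w := by
  obtain ⟨y, hy, ht, hb, ha⟩ := F.exists_touch s
  refine ⟨y, hy, ht, hb, ha, fun w hw => ?_⟩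
  let l := a + s • b + (s ^ 2 / 2) • t
  have hl : ∀ z, l z = (a (z - x) + s * b (z - x) + s ^ 2 / 2 * t (z - x)) + l x := fun z => by
    simp only [l, add_apply, smul_apply, smul_eq_mul, map_sub]
    ring
  have hlw : l w = l x := by rw [hl w, hw, zero_add]
  refine mem_graze_of_forall_le (l := l) (fun h => ?_) (fun z hz => ?_) hy ?_
  · have := hl p
    rw [F.a_sub, F.b_sub, F.t_sub, h, zero_apply, zero_apply] at this
    linarith
  · linarith [hl z, F.nonpos s z hz]
  · rw [hlw, hl y, ha, hb]
    ring

lemma mem_graze_of_apply_eq_zero (F : ConeFrame L x p a b t) {w : E3} (hw : t (w - x) = 0) :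
    p ∈ graze L w := by
  obtain ⟨y, -, hy, -⟩ := F.exists_touch 0
  have hwp : t w = t p := by
    have := F.t_sub
    rw [map_sub] at this hw
    linarith
  refine mem_graze_of_forall_le (l := t) (fun h => ?_) (fun z hz => ?_) F.mem hwp.symm
  · simp [h] at hy
  · have := F.t_nonpos z hz
    rw [map_sub] at this hw
    linarith

lemma exists_add_smul_mem_graze (F : ConeFrame L x p a b t) {v : E3} (hv : t v ≠ 0)
    (hnull : coneForm a b t v v = 0) :
    ∃ μ : ℝ, μ * t v < 0 ∧ x + μ • v ∈ L ∧ x + μ • v ∈ graze L x := by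
  rw [coneForm_apply] at hnull
  obtain ⟨y, hy, ht, hb, ha, hgraze⟩ := F.exists_mem_graze (-(b v) / t v)
  have hav : a v = b v ^ 2 / (2 * t v) := by
    field_simp
    linarith
  have hyv : y - x = (t (y - x) / t v) • v := by
    apply F.eq_of_apply_eq <;> rw [map_smul, smul_eq_mul]
    · rw [ha, hav]
      field_simp
    · rw [hb]
      field_simp
    · rw [div_mul_cancel₀ _ hv]
  refine ⟨t (y - x) / t v, by rwa [div_mul_cancel₀ _ hv], ?_⟩
  rw [← hyv, add_sub_cancel]
  exact ⟨hy, hgraze x (by simp)⟩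

-- A vector `v` with `t v ≠ 0` and nonnegative quadratic form is, up to sign, the sum of a null
-- vector and a nonnegative multiple of the null vector `p - x`.
lemma coneForm_self_neg (F : ConeFrame L x p a b t) (hL : Convex ℝ L) {v : E3} (hv : v ≠ 0)
    (hmiss : ∀ μ : ℝ, x + μ • v ∉ L) : coneForm a b t v v < 0 := by
  by_contra! hQ
  by_cases ht : t v = 0
  · rw [coneForm_apply, ht] at hQ
    have hb : b v = 0 := by nlinarith
    have ha : a v ≠ 0 := fun ha => hv (F.eq_zero v ha hb ht)
    have hpv : p - x = (-(a v)⁻¹) • v := by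
      apply F.eq_of_apply_eq <;> rw [map_smul, smul_eq_mul]
      · rw [F.a_sub, neg_mul, inv_mul_cancel₀ ha]
      · rw [F.b_sub, hb, mul_zero]
      · rw [F.t_sub, ht, mul_zero]
    refine hmiss (-(a v)⁻¹) ?_
    rw [← hpv, add_sub_cancel]
    exact F.mem
  · let τ := -coneForm a b t v v / (2 * t v)
    have hτ : τ * (2 * t v) = -coneForm a b t v v := div_mul_cancel₀ _ (by simpa using ht)
    have htn : t (v - τ • (p - x)) = t v := by rw [map_sub _ v, map_smul, F.t_sub]; simp
    have hnull : coneForm a b t (v - τ • (p - x)) (v - τ • (p - x)) = 0 := by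
      rw [coneForm_apply] at hτ ⊢
      simp only [map_sub _ v, map_smul, F.a_sub, F.b_sub, F.t_sub, smul_eq_mul]
      linear_combination hτ
    obtain ⟨μ, hμ, hy, -⟩ := F.exists_add_smul_mem_graze (htn ▸ ht) hnull
    rw [htn] at hμ
    have hμτ : 0 ≤ μ * τ := by
      have : 2 * (t v) ^ 2 * (μ * τ) = -(μ * t v) * coneForm a b t v v := by
        linear_combination (μ * t v) * hτ
      exact nonneg_of_mul_nonneg_right (this ▸ mul_nonneg (by linarith) hQ) (by positivity)
    obtain ⟨z, hz, hzeq⟩ := hL.exists_mem_add_smul_eq hy F.mem zero_le_one hμτ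
    refine hmiss (μ / (1 + μ * τ)) ?_
    have hzv : x + (μ / (1 + μ * τ)) • v = z := by
      have hpos : 1 + μ * τ ≠ 0 := by positivity
      refine smul_right_injective E3 hpos (Eq.trans ?_ hzeq.symm)
      match_scalars <;> field_simp
      ring
    rwa [hzv]

lemma exists_mem_graze_inter (F : ConeFrame L x p a b t) {w : E3} {s : ℝ}
    (hs : a (w - x) + s * b (w - x) + s ^ 2 / 2 * t (w - x) = 0) :
    ∃ y ∈ graze L x ∩ graze L w, t (y - x) < 0 ∧ b (y - x) = -s * t (y - x) ∧
      coneForm a b t (y - x) (w - x) = 0 := by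
  obtain ⟨y, -, ht, hb, ha, hgraze⟩ := F.exists_mem_graze s
  refine ⟨y, ⟨hgraze x (by simp), hgraze w hs⟩, ht, hb, ?_⟩
  rw [coneForm_apply, ha, hb]
  linear_combination t (y - x) * hs

lemma exists_mem_graze_inter_ne (F : ConeFrame L x p a b t) {w : E3}
    (hw : coneForm a b t (w - x) (w - x) < 0) :
    ∃ y₁ ∈ graze L x ∩ graze L w, ∃ y₂ ∈ graze L x ∩ graze L w, y₁ ≠ y₂ ∧
      coneForm a b t (y₁ - x) (w - x) = 0 ∧ coneForm a b t (y₂ - x) (w - x) = 0 := by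
  rw [coneForm_apply] at hw
  by_cases ht : t (w - x) = 0
  · have hb : b (w - x) ≠ 0 := fun hb => by simp [ht, hb, -map_sub] at hw
    obtain ⟨y, hy, hty, -, hyw⟩ := F.exists_mem_graze_inter (s := -a (w - x) / b (w - x)) (w := w)
      (by rw [ht]; field_simp; ring)
    refine ⟨y, hy, p, ⟨F.mem_graze_of_apply_eq_zero (by simp), F.mem_graze_of_apply_eq_zero ht⟩,
      fun h => ?_, hyw, ?_⟩
    · rw [h, F.t_sub] at hty
      exact hty.false
    · rw [coneForm_apply, F.b_sub, F.t_sub, ht]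
      ring
  · let r := √(discrim (t (w - x) / 2) (b (w - x)) (a (w - x)))
    have hdiscrim : 0 < discrim (t (w - x) / 2) (b (w - x)) (a (w - x)) := by
      rw [discrim]
      linarith
    have hroot := quadratic_eq_zero_iff (div_ne_zero ht two_ne_zero)
      (Real.mul_self_sqrt hdiscrim.le).symm
    have hroot₁ := (hroot _).2 (Or.inl rfl)
    have hroot₂ := (hroot _).2 (Or.inr rfl)
    obtain ⟨y₁, hy₁, hty₁, hby₁, hyw₁⟩ := F.exists_mem_graze_inter (w := w)
      (s := (-b (w - x) + r) / (2 * (t (w - x) / 2))) (by linear_combination hroot₁)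
    obtain ⟨y₂, hy₂, -, hby₂, hyw₂⟩ := F.exists_mem_graze_inter (w := w)
      (s := (-b (w - x) - r) / (2 * (t (w - x) / 2))) (by linear_combination hroot₂)
    refine ⟨y₁, hy₁, y₂, hy₂, fun h => ?_, hyw₁, hyw₂⟩
    rw [← h, hby₁] at hby₂
    have hr : 0 < r := Real.sqrt_pos.2 hdiscrim
    have := mul_right_cancel₀ hty₁.ne hby₂
    rw [neg_inj, div_left_inj' (by simpa using ht)] at this
    linarith

lemma nondegenerate_coneForm (F : ConeFrame L x p a b t) {d : E3}
    (hd : ∀ v, coneForm a b t d v = 0) : d = 0 := by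
  simp only [coneForm_apply] at hd
  have ht : t d = 0 := by simpa [F.a_sub, F.b_sub, F.t_sub, -map_sub] using hd (p - x)
  obtain ⟨y₀, -, hy₀, hb₀, -⟩ := F.exists_touch 0
  have ha : a d = 0 := by simpa [ht, hb₀, hy₀.ne, -map_sub] using hd (y₀ - x)
  obtain ⟨y₁, -, hy₁, hb₁, -⟩ := F.exists_touch 1
  have hb : b d = 0 := by simpa [ht, ha, hb₁, hy₁.ne, -map_sub] using hd (y₁ - x)
  exact F.eq_zero d ha hb ht

end ConeFrame

section LinearAlgebra

variable {𝕜 E : Type*} [Field 𝕜] [AddCommGroup E] [Module 𝕜 E]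

lemma exists_smul_eq_of_mem_inf {V W : Submodule 𝕜 E} (hV : Module.finrank 𝕜 V = 2) {v d d' : E}
    (hv : v ∈ V) (hvW : v ∉ W) (hd : d ∈ V ⊓ W) (hd₀ : d ≠ 0) (hd' : d' ∈ V ⊓ W) :
    ∃ c : 𝕜, c • d = d' := by
  have : FiniteDimensional 𝕜 V := .of_finrank_pos (by omega)
  have hlt : V ⊓ W < V := inf_lt_left.2 fun hle => hvW (hle hv)
  have hfin := Submodule.finrank_lt_finrank_of_lt hlt
  have : FiniteDimensional 𝕜 ↥(V ⊓ W) := Submodule.finiteDimensional_of_le hlt.le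
  have hpos : 0 < Module.finrank 𝕜 ↥(V ⊓ W) :=
    Module.finrank_pos_iff_exists_ne_zero.2 ⟨⟨d, hd⟩, by simpa [Subtype.ext_iff] using hd₀⟩
  obtain ⟨c, hc⟩ := exists_smul_eq_of_finrank_eq_one (K := 𝕜) (V := ↥(V ⊓ W)) (by omega)
    (x := ⟨d, hd⟩) (by simpa [Subtype.ext_iff] using hd₀) ⟨d', hd'⟩
  exact ⟨c, congrArg Subtype.val hc⟩

-- Otherwise `x` is orthogonal to only one direction of the plane `ker N`, which is then orthogonal
-- to all of `ker N` and to `x`, contradicting nondegeneracy.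
lemma bilin_eq_zero_of_exists_orthogonal {B : LinearMap.BilinForm 𝕜 E}
    (hB : ∀ d, (∀ v, B d v = 0) → d = 0) {N : Module.Dual 𝕜 E}
    (hN : Module.finrank 𝕜 (LinearMap.ker N) = 2) {x : E} (hx : N x = 1)
    (hexists : ∀ w, N w = 0 → w ≠ 0 → ∃ d, N d = 0 ∧ d ≠ 0 ∧ B d x = 0 ∧ B d w = 0)
    {v : E} (hv : N v = 0) : B v x = 0 := by
  by_contra hvx
  obtain ⟨d, hdN, hd₀, hdx, -⟩ := hexists v hv (by rintro rfl; simp at hvx)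
  have hdw : ∀ w, N w = 0 → B d w = 0 := fun w hw => by
    rcases eq_or_ne w 0 with rfl | hw₀
    · exact map_zero _
    obtain ⟨d', hdN', hd₀', hdx', hdw'⟩ := hexists w hw hw₀
    obtain ⟨c, rfl⟩ := exists_smul_eq_of_mem_inf (W := LinearMap.ker (B.flip x)) hN hv hvx
      ⟨hdN', hdx'⟩ hd₀' ⟨hdN, hdx⟩
    rw [map_smul, LinearMap.smul_apply, hdw', smul_zero]
  refine hd₀ (hB d fun y => ?_)
  rw [← sub_add_cancel y (N y • x), map_add, map_smul, hdx, hdw _ (by simp [hx]), smul_zero,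
    add_zero]

end LinearAlgebra

section Symmetric

variable {E : Type*} [AddCommGroup E] [TopologicalSpace E] [IsTopologicalAddGroup E] {s : Set E}

lemma neg_mem_frontier_of_eq_neg (hs : s = -s) {x : E} (hx : x ∈ frontier s) :
    -x ∈ frontier s := by
  have hpre : Neg.neg ⁻¹' frontier s = frontier (-s) := (Homeomorph.neg E).preimage_frontier s
  rw [← hs] at hpre
  exact hpre.ge hx

lemma zero_mem_interior_of_eq_neg [Module ℝ E] [ContinuousConstSMul ℝ E] (hconv : Convex ℝ s)
    (hint : (interior s).Nonempty) (hs : s = -s) : (0 : E) ∈ interior s := by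
  obtain ⟨y, hy⟩ := hint
  have hpre : Neg.neg ⁻¹' interior s = interior (-s) := (Homeomorph.neg E).preimage_interior s
  rw [← hs] at hpre
  simpa using hconv.interior.midpoint_mem hy (hpre.ge hy)

end Symmetric

section Plane

lemma mem_lineThrough {x y q : E3} : q ∈ lineThrough x y ↔ ∃ r : ℝ, x + r • (y - x) = q := by
  rw [lineThrough, SetLike.mem_coe, mem_affineSpan_pair_iff_exists_lineMap_eq]
  simp [AffineMap.lineMap_apply, add_comm]

lemma IsPlane.exists_functional {P : AffineSubspace ℝ E3} (hP : IsPlane P) {x : E3}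
    (hx : x ∉ P.direction) : ∃ (N : Module.Dual ℝ E3) (c : ℝ),
      N x = 1 ∧ LinearMap.ker N = P.direction ∧ ∀ y, y ∈ P ↔ N y = c := by
  obtain ⟨N, -, hN⟩ := hP.exists_ker_eq_direction
  have hNx : N x ≠ 0 := fun h => hx (hN ▸ h)
  have hker : LinearMap.ker ((N x)⁻¹ • N) = P.direction := by
    rw [LinearMap.ker_smul _ _ (inv_ne_zero hNx), hN]
  obtain ⟨q, hq⟩ : (P : Set E3).Nonempty := by
    rw [AffineSubspace.nonempty_iff_ne_bot]
    rintro rfl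
    rw [IsPlane, AffineSubspace.direction_bot, finrank_bot] at hP
    omega
  refine ⟨(N x)⁻¹ • N, ((N x)⁻¹ • N) q, by simp [hNx], hker, fun y => ?_⟩
  rw [← AffineSubspace.vsub_right_mem_direction_iff_mem hq, ← hker, LinearMap.mem_ker, vsub_eq_sub,
    map_sub, sub_eq_zero]

lemma lineThrough_neg_inter_eq_singleton {P : Set E3} {N : Module.Dual ℝ E3} {x : E3} {c : ℝ}
    (hx : N x = 1) (hP : ∀ y, y ∈ P ↔ N y = c) : lineThrough x (-x) ∩ P = {c • x} := by
  ext y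
  rw [mem_inter_iff, mem_lineThrough, hP, mem_singleton_iff]
  constructor
  · rintro ⟨⟨r, rfl⟩, h⟩
    have hr : x + r • (-x - x) = (1 - 2 * r) • x := by module
    rw [hr, map_smul, hx, smul_eq_mul, mul_one] at h
    rw [hr, h]
  · rintro rfl
    exact ⟨⟨(1 - c) / 2, by module⟩, by simp [hx]⟩

end Plane

namespace ConeFrame

variable {L : Set E3} {x p : E3} {a b t : StrongDual ℝ E3}

lemma exists_mem_inf_coneForm_eq_zero (F : ConeFrame L x p a b t) {V W : Submodule ℝ E3} {w : E3}
    (hV : ∀ y ∈ graze L x, ∀ z ∈ graze L x, y - z ∈ V)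
    (hW : ∀ y ∈ graze L w, ∀ z ∈ graze L w, y - z ∈ W)
    (hw : coneForm a b t (w - x) (w - x) < 0) :
    ∃ d ∈ V ⊓ W, d ≠ 0 ∧ coneForm a b t d (w - x) = 0 := by
  obtain ⟨y, ⟨hyx, hyw⟩, z, ⟨hzx, hzw⟩, hyz, hy, hz⟩ := F.exists_mem_graze_inter_ne hw
  refine ⟨y - z, ⟨hV y hyx z hzx, hW y hyw z hzw⟩, sub_ne_zero.2 hyz, ?_⟩
  rw [← sub_sub_sub_cancel_right y z x, LinearMap.map_sub₂, hy, hz, sub_zero]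

-- The grazes from `w` and `-w` both meet that from `x` in two points; these two chords are parallel
-- because `V ⊓ W` is a line.
lemma exists_coneForm_eq_zero (F : ConeFrame L x p a b t) {V W : Submodule ℝ E3} {w : E3}
    (hVdim : Module.finrank ℝ V = 2)
    (hV : ∀ y ∈ graze L x, ∀ z ∈ graze L x, y - z ∈ V)
    (hW : ∀ y ∈ graze L w, ∀ z ∈ graze L w, y - z ∈ W)
    (hW' : ∀ y ∈ graze L (-w), ∀ z ∈ graze L (-w), y - z ∈ W) (hwV : w ∈ V) (hwW : w ∉ W)
    (hw : coneForm a b t (w - x) (w - x) < 0) (hw' : coneForm a b t (-w - x) (-w - x) < 0) :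
    ∃ d ∈ V, d ≠ 0 ∧ coneForm a b t d x = 0 ∧ coneForm a b t d w = 0 := by
  obtain ⟨d, hd, hd₀, hdw⟩ := F.exists_mem_inf_coneForm_eq_zero hV hW hw
  obtain ⟨d', hd', hd₀', hdw'⟩ := F.exists_mem_inf_coneForm_eq_zero hV hW' hw'
  obtain ⟨c, rfl⟩ := exists_smul_eq_of_mem_inf hVdim hwV hwW hd' hd₀' hd
  rw [map_smul, LinearMap.smul_apply, smul_eq_mul] at hdw
  have hdw := (mul_eq_zero.1 hdw).resolve_left (left_ne_zero_of_smul hd₀)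
  rw [map_sub] at hdw hdw'
  rw [map_neg] at hdw'
  exact ⟨d', hd'.1, hd₀', by linarith, by linarith⟩

lemma apply_pos_of_eq_neg (F : ConeFrame L x p a b t) (hL : L = -L) : 0 < t x := by
  obtain ⟨y, hy, hty, -⟩ := F.exists_touch 0
  have htny := F.t_nonpos (-y) (by rwa [hL, Set.neg_mem_neg])
  rw [map_sub] at hty htny
  rw [map_neg] at htny
  linarith

-- `2 • c • x - p - x` is the reflection of `p - x` in the line through `x` along the plane `ker N`,
-- which the form preserves as `x` is orthogonal to `ker N`; so it is null as well.
lemma two_smul_sub_mem_graze (F : ConeFrame L x p a b t) (htx : t x ≠ 0) {N : Module.Dual ℝ E3}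
    {c : ℝ} (hx : N x = 1) (hgraze : ∀ y ∈ graze L x, N y = c)
    (horth : ∀ v, N v = 0 → coneForm a b t v x = 0) : (2 : ℝ) • c • x - p ∈ graze L x := by
  have hNp : N p = c := hgraze p (F.mem_graze_of_apply_eq_zero (by simp))
  have hpx : coneForm a b t (p - x) x = -t x := by
    rw [coneForm_apply, F.a_sub, F.b_sub, F.t_sub]
    ring
  have hpp : coneForm a b t (p - x) (p - x) = 0 := by
    rw [coneForm_apply, F.b_sub, F.t_sub]
    ring
  have hxx : -t x = (c - 1) * coneForm a b t x x := by
    have := horth (p - c • x) (by simp [hNp, hx])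
    rw [← hpx, ← sub_eq_zero, ← this]
    simp only [map_sub, map_smul, LinearMap.sub_apply, LinearMap.smul_apply, smul_eq_mul]
    ring
  have hc : c - 1 ≠ 0 := fun h => htx (by rw [h] at hxx; linarith)
  let v := (2 * (c - 1)) • x - (p - x)
  have htv : t v ≠ 0 := by
    rw [map_sub, map_smul, F.t_sub, sub_zero]
    exact smul_ne_zero (mul_ne_zero two_ne_zero hc) htx
  have hnull : coneForm a b t v v = 0 := by
    have hxp := (isSymm_coneForm a b t).eq x (p - x)
    simp only [v, map_sub _ (_ • x), map_smul, LinearMap.sub_apply, LinearMap.smul_apply,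
      smul_eq_mul, hxp, hpx, hpp]
    linear_combination -4 * (c - 1) * hxx
  obtain ⟨μ, -, -, hμ⟩ := F.exists_add_smul_mem_graze htv hnull
  have hμ₁ : μ = 1 := by
    have := hgraze _ hμ
    simp only [v, map_add, map_sub, map_smul, hx, hNp, smul_eq_mul] at this
    exact mul_right_cancel₀ hc (by linear_combination this)
  convert hμ using 1
  rw [hμ₁]
  module

end ConeFrame

namespace AlmostFree

variable {K L : Set E3} {Δ : E3 → AffineSubspace ℝ E3} {x p w : E3} {a b t : StrongDual ℝ E3}

lemma notMem_direction (hAF : AlmostFree K L Δ) (hK : K = -K) (h₀ : (0 : E3) ∈ L)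
    (hx : x ∈ frontier K) : x ∉ (Δ x).direction := fun hmem =>
  Set.disjoint_left.1 (hAF x hx (-x) ⟨neg_mem hmem, neg_mem_frontier_of_eq_neg hK hx⟩)
    (mem_lineThrough.2 ⟨1 / 2, by module⟩) h₀

lemma coneForm_self_neg (hAF : AlmostFree K L Δ) (F : ConeFrame L x p a b t) (hL : Convex ℝ L)
    (hx : x ∈ frontier K) (hxΔ : x ∉ (Δ x).direction) (hw : w ∈ (Δ x).direction)
    (hwK : w ∈ frontier K) : coneForm a b t (w - x) (w - x) < 0 :=
  F.coneForm_self_neg hL (sub_ne_zero.2 fun h => hxΔ (h ▸ hw)) fun μ hμ =>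
    Set.disjoint_left.1 (hAF x hx w ⟨hw, hwK⟩) (mem_lineThrough.2 ⟨μ, rfl⟩) hμ

lemma exists_coneForm_eq_zero_of_mem_frontier (hAF : AlmostFree K L Δ) (F : ConeFrame L x p a b t)
    (hK : K = -K) (hLcl : IsClosed L) (hL : Convex ℝ L) (hLsymm : L = -L)
    (h₀ : (0 : E3) ∈ interior L)
    (hΔ : ∀ z ∈ frontier K, IsPlane (Δ z) ∧ graze L z ⊆ Δ z) (hx : x ∈ frontier K)
    (hw : w ∈ (Δ x).direction) (hwK : w ∈ frontier K) :
    ∃ d ∈ (Δ x).direction, d ≠ 0 ∧ coneForm a b t d x = 0 ∧ coneForm a b t d w = 0 := by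
  have hsub : ∀ z ∈ frontier K, ∀ y ∈ graze L z, ∀ y' ∈ graze L z, y - y' ∈ (Δ z).direction :=
    fun z hz y hy y' hy' => AffineSubspace.vsub_mem_direction ((hΔ z hz).2 hy) ((hΔ z hz).2 hy')
  have hnot := fun z hz => hAF.notMem_direction hK (interior_subset h₀) (x := z) hz
  refine F.exists_coneForm_eq_zero (hΔ x hx).1 (hsub x hx) (hsub w hwK) (fun y hy z hz => ?_) hw
    (hnot w hwK) (hAF.coneForm_self_neg F hL hx (hnot x hx) hw hwK)
    (hAF.coneForm_self_neg F hL hx (hnot x hx) (neg_mem hw) (neg_mem_frontier_of_eq_neg hK hwK))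
  have hneg : ∀ y ∈ graze L (-w), -y ∈ graze L w := fun y hy => by
    simpa using neg_mem_graze_neg hLcl hL h₀ hLsymm hy
  simpa only [neg_sub_neg] using hsub w hwK _ (hneg z hz) _ (hneg y hy)

lemma coneForm_eq_zero (hAF : AlmostFree K L Δ) (F : ConeFrame L x p a b t)
    (hK : Convex ℝ K) (hKb : Bornology.IsBounded K) (hKsymm : K = -K) (h₀K : (0 : E3) ∈ interior K)
    (hLcl : IsClosed L) (hL : Convex ℝ L) (hLsymm : L = -L) (h₀ : (0 : E3) ∈ interior L)
    (hΔ : ∀ z ∈ frontier K, IsPlane (Δ z) ∧ graze L z ⊆ Δ z) (hx : x ∈ frontier K)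
    {N : Module.Dual ℝ E3} (hN : LinearMap.ker N = (Δ x).direction) (hNx : N x = 1) {v : E3}
    (hv : N v = 0) : coneForm a b t v x = 0 := by
  refine bilin_eq_zero_of_exists_orthogonal (fun _ => F.nondegenerate_coneForm)
    (hN ▸ (hΔ x hx).1) hNx (fun w hw hw₀ => ?_) hv
  have hK₀ := mem_interior_iff_mem_nhds.1 h₀K
  have hg : (gauge K w)⁻¹ ≠ 0 := inv_ne_zero (gauge_pos_of_isBounded hK₀ hKb hw₀).ne'
  obtain ⟨d, hd, hd₀, hdx, hdw⟩ := hAF.exists_coneForm_eq_zero_of_mem_frontier F hKsymm hLcl hL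
    hLsymm h₀ hΔ hx (Submodule.smul_mem _ _ (hN ▸ hw)) (inv_gauge_smul_mem_frontier hK hK₀ hKb hw₀)
  rw [map_smul, smul_eq_mul] at hdw
  rw [← hN] at hd
  exact ⟨d, hd, hd₀, hdx, (mul_eq_zero.1 hdw).resolve_left hg⟩

end AlmostFree

theorem statement1
    (K L : Set E3)
    (hKcomp : IsCompact K) (hKconv : Convex ℝ K) (hKint : (interior K).Nonempty)
    (hKsym : K = -K)
    (hLcomp : IsCompact L) (hLconv : Convex ℝ L) (hLint : (interior L).Nonempty)
    (hLsym : L = -L) (hLstrict : StrictConvex ℝ L)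
    (hLK : L ⊆ interior K)
    (Δ : E3 → AffineSubspace ℝ E3)
    (hΔ : ∀ z ∈ frontier K, IsPlane (Δ z) ∧ graze L z ⊆ (Δ z : Set E3))
    (hAF : AlmostFree K L Δ) :
    ∀ x ∈ frontier K, ∃ Ox : E3,
      lineThrough x (-x) ∩ (Δ x : Set E3) = {Ox} ∧
      ∀ p ∈ graze L x, (2 : ℝ) • Ox - p ∈ graze L x := by
  intro x hx
  have h₀ : (0 : E3) ∈ interior L := zero_mem_interior_of_eq_neg hLconv hLint hLsym
  have h₀K : (0 : E3) ∈ interior K := hLK (interior_subset h₀)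
  obtain ⟨N, c, hNx, hker, hmem⟩ := (hΔ x hx).1.exists_functional
    (hAF.notMem_direction hKsym (interior_subset h₀) hx)
  refine ⟨c • x, lineThrough_neg_inter_eq_singleton hNx hmem, fun p hp => ?_⟩
  obtain ⟨a, b, t, F⟩ := exists_coneFrame hKconv hKcomp.isBounded hLcomp hLstrict h₀ hLK
    (fun z hz => ⟨Δ z, hΔ z hz⟩) hx hp
  have horth : ∀ v, N v = 0 → coneForm a b t v x = 0 := fun v =>
    hAF.coneForm_eq_zero F hKconv hKcomp.isBounded hKsym h₀K hLcomp.isClosed hLconv hLsym h₀ hΔ hx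
      hker hNx
  exact F.two_smul_sub_mem_graze (F.apply_pos_of_eq_neg hLsym).ne' hNx
    (fun y hy => (hmem y).1 ((hΔ x hx).2 hy)) horth

end
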